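/- Let p and q be distinct primes and m ∈ ℕ. Then K_1(C_{p^m} ⊕ C_q ⊕ C_q) = Σ_{k=1}^m 1/p^{k−1} + 2 = (p^m − 1)/(p^m − p^{m−1}) + 2. -/

import Mathlib

open Finset

/-- `S(I)` is minimal zero-sum: nonempty, zero-sum, and no proper nonempty
subfamily is zero-sum. -/
def IsMinZeroSum {G : Type*} [AddCommGroup G] {ℓ : ℕ} (g : Fin ℓ → G)
    (I : Finset (Fin ℓ)) : Prop :=
  I.Nonempty ∧ ∑ i ∈ I, g i = 0 ∧ ∀ J ⊂ I, J.Nonempty → ∑ i ∈ J, g i ≠ 0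

/-- `P` is an irreducible factorization of the indexed multiset `g`: a partition
of the index set all of whose parts are minimal zero-sum. -/
def IsFactorization {G : Type*} [AddCommGroup G] {ℓ : ℕ} (g : Fin ℓ → G)
    (P : Finpartition (Finset.univ : Finset (Fin ℓ))) : Prop :=
  ∀ I ∈ P.parts, IsMinZeroSum g I

/-- `g` is a unique factorization indexed multiset (UFIM) over `G∖{0}`:
all elements are nonzero and there is exactly one irreducible factorization. -/
def IsUFIM {G : Type*} [AddCommGroup G] {ℓ : ℕ} (g : Fin ℓ → G) : Prop :=
  (∀ i, g i ≠ 0) ∧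
  ∃! P : Finpartition (Finset.univ : Finset (Fin ℓ)), IsFactorization g P

/-- The cross number `k(S) = ∑ 1/ord(g_i)`. -/
noncomputable def crossNum {G : Type*} [AddCommGroup G] {ℓ : ℕ} (g : Fin ℓ → G) : ℝ :=
  ∑ i, (1 : ℝ) / (addOrderOf (g i) : ℝ)

/-- `K₁(G)`: the maximal cross number of a UFIM over `G∖{0}`. -/
noncomputable def K1 (G : Type*) [AddCommGroup G] : ℝ :=
  sSup {x : ℝ | ∃ (ℓ : ℕ) (g : Fin ℓ → G), IsUFIM g ∧ crossNum g = x}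

/-- `N₁(G)`: the maximal length of a UFIM over `G∖{0}`. -/
noncomputable def N1 (G : Type*) [AddCommGroup G] : ℕ :=
  sSup {n : ℕ | ∃ g : Fin n → G, IsUFIM g}

/-- `K(G)`: the maximal cross number of a minimal zero-sum indexed multiset over `G∖{0}`. -/
noncomputable def Kcross (G : Type*) [AddCommGroup G] : ℝ :=
  sSup {x : ℝ | ∃ (ℓ : ℕ) (g : Fin ℓ → G), (∀ i, g i ≠ 0) ∧
    IsMinZeroSum g Finset.univ ∧ crossNum g = x}

/-- `g` is zero-sum free: no nonempty subfamily is zero-sum. -/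
def IsZeroSumFree {G : Type*} [AddCommGroup G] {ℓ : ℕ} (g : Fin ℓ → G) : Prop :=
  ∀ I : Finset (Fin ℓ), I.Nonempty → ∑ i ∈ I, g i ≠ 0

/-- The little cross number `k(G)`: the maximal cross number of a zero-sum free
indexed multiset over `G∖{0}`. -/
noncomputable def littleCross (G : Type*) [AddCommGroup G] : ℝ :=
  sSup {x : ℝ | ∃ (ℓ : ℕ) (g : Fin ℓ → G), (∀ i, g i ≠ 0) ∧
    IsZeroSumFree g ∧ crossNum g = x}

/-!
A zero-sum family factors uniquely if and only if its zero-sum subfamilies are closed under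
intersection, and this property survives replacing disjoint subfamilies by their sums.

Upper bound, by induction on the exponent `j` of `p`. Replacements that do not lower the cross
number may be carried out, so assume that every replacement lowers it. Multiplication by `p ^ j q`
maps the terms it does not kill to nonzero elements of the group of order `p` formed by the elements
killed by `p`, and there an intersection-closed family has at most `p` terms. The terms in question
have order at least `p ^ (j + 1)`, so they contribute at most `1 / p ^ j`, except when they have to
be split by whether `q` divides their order: then they may contribute `1 / (p ^ j q)` more, which is
regained by merging them into terms killed by `p ^ j q`.

The base of the induction is that a uniquely factoring family of nonzero elements of the plane `V`
over `𝔽_q` has at most `2q` terms. The augmentation ideal `I` of the group algebra `𝔽_q[V]`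
satisfies `I ^ (2q - 1) = 0`, and the coefficient at `0` of a product of elements `1 - X ^ g`
detects zero sums. A family with more than `2q` terms would yield an element of `I ^ (2q - 1)`,
built from such products, whose coefficient at `0` is not zero.

The lower bound comes from the blocks `(1 - p) a, a, …, a` of length `p`, with `a` replaced
successively by `p a`, `p² a`, …: the sums of a proper nonempty part of the block of `a` lie outside
the subgroup generated by `p a`, so that the blocks are independent.
-/

section ZeroSum

variable {ι κ G H : Type*} [AddCommGroup G] [AddCommGroup H]

/-- Minimal zero-sum subfamilies of a family over an arbitrary index type. -/
def IsZeroSumAtom (g : ι → G) (T : Finset ι) : Prop :=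
  Minimal (fun I => I.Nonempty ∧ ∑ i ∈ I, g i = 0) T

theorem isMinZeroSum_iff_isZeroSumAtom {ℓ : ℕ} {g : Fin ℓ → G} {T : Finset (Fin ℓ)} :
    IsMinZeroSum g T ↔ IsZeroSumAtom g T := by
  constructor
  · rintro ⟨hne, h0, hmin⟩
    refine ⟨⟨hne, h0⟩, fun J hJ hJT => ?_⟩
    by_contra h
    exact hmin J ⟨hJT, h⟩ hJ.1 hJ.2
  · rintro ⟨⟨hne, h0⟩, hmin⟩
    exact ⟨hne, h0, fun J hJ hJne hJ0 => hJ.2 (hmin ⟨hJne, hJ0⟩ hJ.1)⟩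

namespace IsZeroSumAtom

variable {g : ι → G} {T J : Finset ι}

theorem nonempty (h : IsZeroSumAtom g T) : T.Nonempty := h.1.1

theorem sum_eq_zero (h : IsZeroSumAtom g T) : ∑ i ∈ T, g i = 0 := h.1.2

theorem eq_of_subset (h : IsZeroSumAtom g T) (hJ : J ⊆ T) (hne : J.Nonempty)
    (h0 : ∑ i ∈ J, g i = 0) : J = T :=
  Minimal.eq_of_le h ⟨hne, h0⟩ hJ

theorem sum_ne_zero (h : IsZeroSumAtom g T) (hJ : J ⊂ T) (hne : J.Nonempty) :
    ∑ i ∈ J, g i ≠ 0 :=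
  fun h0 => hJ.ne (h.eq_of_subset hJ.1 hne h0)

theorem nontrivial (h : IsZeroSumAtom g T) (hne : ∀ i ∈ T, g i ≠ 0) : T.Nontrivial := by
  refine h.nonempty.exists_eq_singleton_or_nontrivial.resolve_left ?_
  rintro ⟨x, rfl⟩
  exact hne x (mem_singleton_self x) (by simpa using h.sum_eq_zero)

end IsZeroSumAtom

theorem exists_isZeroSumAtom_subset {g : ι → G} {U : Finset ι} (hU : U.Nonempty)
    (h0 : ∑ i ∈ U, g i = 0) : ∃ T ⊆ U, IsZeroSumAtom g T :=
  exists_minimal_le_of_wellFoundedLT (fun I : Finset ι => I.Nonempty ∧ ∑ i ∈ I, g i = 0) U ⟨hU, h0⟩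

variable [DecidableEq ι]

theorem sum_sdiff_eq_zero {g : ι → G} {I J : Finset ι} (h : J ⊆ I) (hI : ∑ i ∈ I, g i = 0)
    (hJ : ∑ i ∈ J, g i = 0) : ∑ i ∈ I \ J, g i = 0 := by
  rw [sum_sdiff_eq_sub h, hI, hJ, sub_zero]

theorem exists_finpartition_isZeroSumAtom_extending {g : ι → G} {s I : Finset ι} (hI : I ⊆ s)
    (hs : ∑ i ∈ s, g i = 0) (hI0 : ∑ i ∈ I, g i = 0) (P : Finpartition I)
    (hP : ∀ T ∈ P.parts, IsZeroSumAtom g T) :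
    ∃ Q : Finpartition s, P.parts ⊆ Q.parts ∧ ∀ T ∈ Q.parts, IsZeroSumAtom g T := by
  induction hn : #(s \ I) using Nat.strong_induction_on generalizing I with
  | _ n ih =>
  rcases (s \ I).eq_empty_or_nonempty with he | hne
  · exact ⟨P.copy (hI.antisymm (sdiff_eq_empty_iff_subset.1 he)), Subset.rfl, hP⟩
  obtain ⟨T, hTs, hT⟩ := exists_isZeroSumAtom_subset hne (sum_sdiff_eq_zero hI hs hI0)
  have hdisj : Disjoint I T := disjoint_sdiff.mono_right hTs
  have hsub : I ∪ T ⊆ s := union_subset hI (hTs.trans sdiff_subset)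
  have hlt : #(s \ (I ∪ T)) < n := by
    rw [← hn, show s \ (I ∪ T) = (s \ I) \ T from sdiff_sdiff_left.symm]
    exact card_lt_card (sdiff_ssubset hTs hT.nonempty)
  obtain ⟨Q, hQ, hQa⟩ := ih _ hlt hsub (by rw [sum_union hdisj, hI0, hT.sum_eq_zero, zero_add])
    (P.extend hT.nonempty.ne_empty hdisj rfl) (by simpa [hT] using hP) rfl
  exact ⟨Q, (subset_insert _ _).trans hQ, hQa⟩

theorem exists_finpartition_isZeroSumAtom {g : ι → G} {s : Finset ι} (hs : ∑ i ∈ s, g i = 0) :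
    ∃ P : Finpartition s, ∀ T ∈ P.parts, IsZeroSumAtom g T := by
  obtain ⟨P, -, hP⟩ := exists_finpartition_isZeroSumAtom_extending (empty_subset s) hs sum_empty
    (Finpartition.empty (Finset ι)) (by simp)
  exact ⟨P, hP⟩

/-- The zero-sum subfamilies of `s` are closed under intersection. For a zero-sum family this is
unique factorization, and unlike the latter it makes sense for, and passes to, arbitrary
subfamilies. -/
def ZeroSumInterClosed (s : Finset ι) (g : ι → G) : Prop :=
  ∀ ⦃I⦄, I ⊆ s → ∀ ⦃J⦄, J ⊆ s → ∑ i ∈ I, g i = 0 → ∑ i ∈ J, g i = 0 → ∑ i ∈ I ∩ J, g i = 0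

namespace ZeroSumInterClosed

variable {s t T T' Z : Finset ι} {g : ι → G}

theorem mono (h : ZeroSumInterClosed s g) (hts : t ⊆ s) : ZeroSumInterClosed t g :=
  fun _ hI _ hJ => h (hI.trans hts) (hJ.trans hts)

theorem subset_or_disjoint (h : ZeroSumInterClosed s g) (hT : IsZeroSumAtom g T) (hTs : T ⊆ s)
    (hZs : Z ⊆ s) (hZ : ∑ i ∈ Z, g i = 0) : T ⊆ Z ∨ Disjoint T Z := by
  rw [or_iff_not_imp_right, not_disjoint_iff_nonempty_inter]
  intro hne
  exact inter_eq_left.1 (hT.eq_of_subset inter_subset_left hne (h hTs hZs hT.sum_eq_zero hZ))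

theorem eq_of_mem (h : ZeroSumInterClosed s g) (hT : IsZeroSumAtom g T) (hT' : IsZeroSumAtom g T')
    (hTs : T ⊆ s) (hTs' : T' ⊆ s) {x : ι} (hx : x ∈ T) (hx' : x ∈ T') : T = T' := by
  have hsub : T ⊆ T' := (h.subset_or_disjoint hT hTs hTs' hT'.sum_eq_zero).resolve_right
    (not_disjoint_iff.2 ⟨x, hx, hx'⟩)
  exact hT'.eq_of_subset hsub hT.nonempty hT.sum_eq_zero

theorem map (h : ZeroSumInterClosed s g) (φ : G →+ H)
    (hφ : ∀ I ⊆ s, φ (∑ i ∈ I, g i) = 0 → ∑ i ∈ I, g i = 0) :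
    ZeroSumInterClosed s (fun i => φ (g i)) := by
  intro I hI J hJ hI0 hJ0
  simp only [← map_sum] at hI0 hJ0 ⊢
  rw [h hI hJ (hφ I hI hI0) (hφ J hJ hJ0), map_zero]

end ZeroSumInterClosed

/-- Unique factorization for families over an arbitrary index type, elements `0` allowed. Allowing
`0` makes the notion stable under every coarsening of the index set. -/
structure IsUF (s : Finset ι) (g : ι → G) : Prop where
  sum_eq_zero : ∑ i ∈ s, g i = 0
  interClosed : ZeroSumInterClosed s g

theorem IsUFIM.isUF {ℓ : ℕ} {g : Fin ℓ → G} (h : IsUFIM g) : IsUF univ g := by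
  obtain ⟨-, P, hP, huniq⟩ := h
  have hPa : ∀ T ∈ P.parts, IsZeroSumAtom g T :=
    fun T hT => isMinZeroSum_iff_isZeroSumAtom.1 (hP T hT)
  have sum_eq_zero_of_saturated {Z : Finset (Fin ℓ)}
      (hZ : ∀ T ∈ P.parts, T ∩ Z = T ∨ T ∩ Z = ∅) : ∑ i ∈ Z, g i = 0 := by
    rw [← univ_inter Z, ← P.biUnion_parts, biUnion_inter, sum_biUnion]
    · refine sum_eq_zero fun T hT => ?_
      rcases hZ T hT with h | h
      · simpa [h] using (hPa T hT).sum_eq_zero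
      · simp [h]
    · exact fun T hT T' hT' hne =>
        (P.disjoint hT hT' hne).mono inter_subset_left inter_subset_left
  have hs : ∑ i, g i = 0 := sum_eq_zero_of_saturated fun T _ => .inl (inter_univ T)
  have saturated {I : Finset (Fin ℓ)} (hI : ∑ i ∈ I, g i = 0) :
      ∀ T ∈ P.parts, T ∩ I = T ∨ T ∩ I = ∅ := by
    obtain ⟨R, hR⟩ := exists_finpartition_isZeroSumAtom hI
    obtain ⟨Q, hRQ, hQ⟩ := exists_finpartition_isZeroSumAtom_extending (subset_univ I) hs hI R hR
    obtain rfl := huniq Q fun T hT => isMinZeroSum_iff_isZeroSumAtom.2 (hQ T hT)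
    intro T hT
    rw [inter_eq_left, ← disjoint_iff_inter_eq_empty, or_iff_not_imp_right, not_disjoint_iff]
    rintro ⟨x, hxT, hxI⟩
    obtain ⟨T', hT', hxT'⟩ := R.exists_mem hxI
    obtain rfl := Q.eq_of_mem_parts hT (hRQ hT') hxT hxT'
    exact R.subset hT'
  refine ⟨hs, fun I _ J _ hI hJ => sum_eq_zero_of_saturated fun T hT => ?_⟩
  rcases saturated hI T hT with h | h <;> rcases saturated hJ T hT with h' | h' <;>
    simp [← inter_assoc, h, h']

namespace IsUF

variable {s : Finset ι} {g : ι → G}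

theorem isUFIM {ℓ : ℕ} {g : Fin ℓ → G} (h : IsUF univ g) (h0 : ∀ i, g i ≠ 0) : IsUFIM g := by
  obtain ⟨P, hP⟩ := exists_finpartition_isZeroSumAtom h.sum_eq_zero
  have parts_subset {Q R : Finpartition (univ : Finset (Fin ℓ))}
      (hQ : ∀ T ∈ Q.parts, IsZeroSumAtom g T) (hR : ∀ T ∈ R.parts, IsZeroSumAtom g T) :
      Q.parts ⊆ R.parts := by
    intro T hT
    obtain ⟨x, hx⟩ := (hQ T hT).nonempty
    obtain ⟨T', hT', hx'⟩ := R.exists_mem (mem_univ x)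
    rwa [h.interClosed.eq_of_mem (hQ T hT) (hR T' hT') (subset_univ _) (subset_univ _) hx hx']
  refine ⟨h0, P, fun T hT => isMinZeroSum_iff_isZeroSumAtom.2 (hP T hT), fun Q hQ => ?_⟩
  replace hQ : ∀ T ∈ Q.parts, IsZeroSumAtom g T :=
    fun T hT => isMinZeroSum_iff_isZeroSumAtom.1 (hQ T hT)
  exact Finpartition.ext ((parts_subset hQ hP).antisymm (parts_subset hP hQ))

theorem sdiff (h : IsUF s g) {D : Finset ι} (hD : D ⊆ s) (h0 : ∑ i ∈ D, g i = 0) :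
    IsUF (s \ D) g :=
  ⟨sum_sdiff_eq_zero hD h.sum_eq_zero h0, h.interClosed.mono sdiff_subset⟩

theorem map (h : IsUF s g) (φ : G →+ H)
    (hφ : ∀ I ⊆ s, φ (∑ i ∈ I, g i) = 0 → ∑ i ∈ I, g i = 0) : IsUF s (fun i => φ (g i)) :=
  ⟨by rw [← map_sum, h.sum_eq_zero, map_zero], h.interClosed.map φ hφ⟩

theorem congr {g' : ι → G} (h : IsUF s g) (hg : ∀ i ∈ s, g i = g' i) : IsUF s g' := by
  have sum_eq {I : Finset ι} (hI : I ⊆ s) : ∑ i ∈ I, g i = ∑ i ∈ I, g' i :=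
    sum_congr rfl fun i hi => hg i (hI hi)
  refine ⟨sum_eq Subset.rfl ▸ h.sum_eq_zero, fun I hI J hJ hI0 hJ0 => ?_⟩
  rw [← sum_eq hI] at hI0
  rw [← sum_eq hJ] at hJ0
  rw [← sum_eq (inter_subset_left.trans hI)]
  exact h.interClosed hI hJ hI0 hJ0

theorem fiberSum [DecidableEq κ] (h : IsUF s g) {f : ι → κ} {t : Finset κ}
    (hf : ∀ i ∈ s, f i ∈ t) : IsUF t (fun k => ∑ i ∈ s with f i = k, g i) := by
  have sum_eq (I : Finset κ) :
      ∑ k ∈ I, ∑ i ∈ s with f i = k, g i = ∑ i ∈ s with f i ∈ I, g i :=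
    sum_fiberwise_eq_sum_filter s I f g
  refine ⟨?_, fun I _ J _ hI hJ => ?_⟩
  · rw [sum_eq, filter_true_of_mem hf, h.sum_eq_zero]
  · rw [sum_eq] at hI hJ ⊢
    simp only [mem_inter, filter_and]
    exact h.interClosed (filter_subset _ _) (filter_subset _ _) hI hJ

theorem merge [DecidableEq κ] [Fintype κ] (h : IsUF s g) {X : Finset ι} (hX : X ⊆ s) (c : ι → κ) :
    IsUF ((s \ X).disjSum univ) (Sum.elim g fun k => ∑ i ∈ X with c i = k, g i) := by
  let f (i : ι) : ι ⊕ κ := if i ∈ X then .inr (c i) else .inl i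
  have hf : ∀ i ∈ s, f i ∈ (s \ X).disjSum univ := fun i hi => by by_cases i ∈ X <;> simp [f, *]
  refine (h.fiberSum hf).congr fun k hk => ?_
  rcases k with i | k
  · have hi : i ∈ s \ X := inl_mem_disjSum.1 hk
    have fiber : {j ∈ s | f j = .inl i} = {i} := by grind
    simp only [fiber, sum_singleton, Sum.elim_inl]
  · have fiber : {j ∈ s | f j = .inr k} = {j ∈ X | c j = k} := by grind
    simp only [fiber, Sum.elim_inr]

end IsUF

end ZeroSum

section SubsumDifferences

open scoped Pointwise

variable {ι G H : Type*} [AddCommGroup G] [AddCommGroup H]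

/-- Zero-sum-freeness for families over an arbitrary index type. -/
def ZeroSumFree (V : Finset ι) (g : ι → G) : Prop :=
  ∀ ⦃J⦄, J ⊆ V → J.Nonempty → ∑ i ∈ J, g i ≠ 0

theorem zeroSumFree_of_forall_not_isZeroSumAtom {V : Finset ι} {g : ι → G}
    (h : ∀ T ⊆ V, ¬IsZeroSumAtom g T) : ZeroSumFree V g := by
  intro J hJ hne h0
  obtain ⟨T, hTJ, hT⟩ := exists_isZeroSumAtom_subset hne h0
  exact h T (hTJ.trans hJ) hT

theorem ZeroSumInterClosed.zeroSumFree [DecidableEq ι] {s W : Finset ι} {g : ι → G}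
    (h : ZeroSumInterClosed s g) (hW : W ⊆ s)
    (hatom : ∀ x ∈ W, ∃ T ⊆ s, IsZeroSumAtom g T ∧ x ∈ T ∧ ¬T ⊆ W) : ZeroSumFree W g := by
  refine zeroSumFree_of_forall_not_isZeroSumAtom fun R hR hRa => ?_
  obtain ⟨x, hx⟩ := hRa.nonempty
  obtain ⟨T, hTs, hT, hxT, hTW⟩ := hatom x (hR hx)
  exact hTW (h.eq_of_mem hRa hT (hR.trans hW) hTs hx hxT ▸ hR)

theorem IsZeroSumAtom.zeroSumFree_of_ssubset {g : ι → G} {T V : Finset ι} (hT : IsZeroSumAtom g T)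
    (hV : V ⊂ T) : ZeroSumFree V g :=
  fun _ hJ hne => hT.sum_ne_zero (hJ.trans_ssubset hV) hne

/-- Up to sign, all differences of elements of `W` are sums of subfamilies of `X`. Such sets `W`
witness that the subfamilies of `X` have many distinct sums, and they multiply under adjoining a
zero-sum family. -/
def SubsumDifferences (X : Finset ι) (g : ι → G) (W : Finset G) : Prop :=
  ∀ ⦃w⦄, w ∈ W → ∀ ⦃w'⦄, w' ∈ W → ∃ Z ⊆ X, ∑ i ∈ Z, g i = w - w' ∨ ∑ i ∈ Z, g i = w' - w

theorem SubsumDifferences.card_le {X : Finset ι} {g : ι → G} {W : Finset G}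
    (hW : SubsumDifferences X g W) (K : AddSubgroup G) [Finite K] (hK : ∀ x ∈ X, g x ∈ K) :
    #W ≤ Nat.card K := by
  rcases W.eq_empty_or_nonempty with rfl | ⟨w₀, hw₀⟩
  · exact Nat.zero_le _
  have sub_mem (w : W) : w - w₀ ∈ K := by
    obtain ⟨Z, hZX, hZ⟩ := hW w.2 hw₀
    have hZK : ∑ i ∈ Z, g i ∈ K := K.sum_mem fun i hi => hK i (hZX hi)
    rcases hZ with hZ | hZ
    · rwa [← hZ]
    · rwa [← neg_sub, neg_mem_iff, ← hZ]
  have inj : Function.Injective fun w : W => (⟨w - w₀, sub_mem w⟩ : K) :=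
    fun w w' h => Subtype.ext (sub_left_injective (congrArg Subtype.val h))
  simpa using Nat.card_le_card_of_injective _ inj

theorem ZeroSumFree.exists_subsumDifferences {V : Finset ι} {g : ι → G}
    (hV : ZeroSumFree V g) : ∃ W : Finset G, #W = #V + 1 ∧ SubsumDifferences V g W := by
  classical
  suffices ∃ W : Finset G, #W = #V + 1 ∧ (∀ w ∈ W, ∃ Z ⊆ V, ∑ i ∈ Z, g i = w) ∧
      SubsumDifferences V g W from this.imp fun W h => ⟨h.1, h.2.2⟩
  induction V using Finset.induction_on with
  | empty => exact ⟨{0}, by simp, by simp, by simp [SubsumDifferences]⟩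
  | insert x V hx ih =>
  obtain ⟨W, hcard, hsum, hdiff⟩ := ih fun J hJ => hV (hJ.trans (subset_insert _ _))
  have translate (w : G) (hw : w ∈ W) :
      ∃ Z ⊆ insert x V, Z.Nonempty ∧ ∑ i ∈ Z, g i = g x + w := by
    obtain ⟨Z, hZ, rfl⟩ := hsum w hw
    exact ⟨insert x Z, insert_subset_insert _ hZ, insert_nonempty _ _,
      sum_insert fun h => hx (hZ h)⟩
  refine ⟨insert 0 (W.image (g x + ·)), ?_, ?_, ?_⟩
  · rw [card_insert_of_notMem, card_image_of_injective _ (add_right_injective _), hcard,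
      card_insert_of_notMem hx]
    intro h
    obtain ⟨w, hw, h0⟩ := mem_image.1 h
    obtain ⟨Z, hZ, hne, hsumZ⟩ := translate w hw
    exact hV hZ hne (hsumZ.trans h0)
  · simp only [forall_mem_insert, forall_mem_image]
    exact ⟨⟨∅, by simp⟩, fun w hw => (translate w hw).imp fun Z h => ⟨h.1, h.2.2⟩⟩
  · simp only [SubsumDifferences, forall_mem_insert, forall_mem_image, add_sub_add_left_eq_sub,
      sub_zero, zero_sub]
    refine ⟨⟨⟨∅, by simp⟩, fun w hw => ?_⟩, fun w hw => ⟨?_, fun w' hw' => ?_⟩⟩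
    · exact (translate w hw).imp fun Z h => ⟨h.1, .inr h.2.2⟩
    · exact (translate w hw).imp fun Z h => ⟨h.1, .inl h.2.2⟩
    · exact (hdiff hw hw').imp fun Z h => ⟨h.1.trans (subset_insert _ _), h.2⟩

theorem IsZeroSumAtom.exists_subsumDifferences {T : Finset ι} {g : ι → G}
    (hT : IsZeroSumAtom g T) : ∃ W : Finset G, #W = #T ∧ SubsumDifferences T g W := by
  classical
  obtain ⟨x, hx⟩ := hT.nonempty
  obtain ⟨W, hcard, hW⟩ :=
    (hT.zeroSumFree_of_ssubset (erase_ssubset hx)).exists_subsumDifferences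
  refine ⟨W, by rw [hcard, card_erase_add_one hx], fun w hw w' hw' => ?_⟩
  exact (hW hw hw').imp fun Z h => ⟨h.1.trans (erase_subset _ _), h.2⟩

theorem IsZeroSumAtom.card_le {T : Finset ι} {g : ι → G} (hT : IsZeroSumAtom g T)
    (K : AddSubgroup G) [Finite K] (hK : ∀ x ∈ T, g x ∈ K) : #T ≤ Nat.card K := by
  obtain ⟨W, hcard, hW⟩ := hT.exists_subsumDifferences
  exact hcard ▸ hW.card_le K hK

namespace SubsumDifferences

variable {U X : Finset ι} {g : ι → G} {A B : Finset G}

theorem exists_sum_eq_sub (hA : SubsumDifferences U g A) (hU : ∑ i ∈ U, g i = 0) {a a' : G}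
    (ha : a ∈ A) (ha' : a' ∈ A) : ∃ D ⊆ U, ∑ i ∈ D, g i = a - a' := by
  classical
  obtain ⟨Z, hZU, hZ | hZ⟩ := hA ha ha'
  · exact ⟨Z, hZU, hZ⟩
  · exact ⟨U \ Z, sdiff_subset, by rw [sum_sdiff_eq_sub hZU, hU, hZ]; abel⟩

theorem exists_sum_eq_sub_pair (hA : SubsumDifferences U g A) (hU : ∑ i ∈ U, g i = 0)
    (hB : SubsumDifferences X g B) {a a' b b' : G} (ha : a ∈ A) (ha' : a' ∈ A) (hb : b ∈ B)
    (hb' : b' ∈ B) : ∃ D ⊆ U, ∃ Z ⊆ X, (∑ i ∈ D, g i = a - a' ∧ ∑ i ∈ Z, g i = b - b') ∨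
      (∑ i ∈ D, g i = a' - a ∧ ∑ i ∈ Z, g i = b' - b) := by
  obtain ⟨Z, hZX, hZ | hZ⟩ := hB hb hb'
  · obtain ⟨D, hDU, hD⟩ := hA.exists_sum_eq_sub hU ha ha'
    exact ⟨D, hDU, Z, hZX, .inl ⟨hD, hZ⟩⟩
  · obtain ⟨D, hDU, hD⟩ := hA.exists_sum_eq_sub hU ha' ha
    exact ⟨D, hDU, Z, hZX, .inr ⟨hD, hZ⟩⟩

variable [DecidableEq ι] [DecidableEq G]

theorem add (hA : SubsumDifferences U g A) (hU : ∑ i ∈ U, g i = 0) (hB : SubsumDifferences X g B)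
    (hUX : Disjoint U X) : SubsumDifferences (U ∪ X) g (A + B) := by
  intro w hw w' hw'
  obtain ⟨a, ha, b, hb, rfl⟩ := mem_add.1 hw
  obtain ⟨a', ha', b', hb', rfl⟩ := mem_add.1 hw'
  obtain ⟨D, hDU, Z, hZX, h⟩ := hA.exists_sum_eq_sub_pair hU hB ha ha' hb hb'
  refine ⟨D ∪ Z, union_subset_union hDU hZX, ?_⟩
  rw [sum_union (hUX.mono hDU hZX)]
  rcases h with ⟨hD, hZ⟩ | ⟨hD, hZ⟩
  · exact .inl (by rw [hD, hZ]; abel)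
  · exact .inr (by rw [hD, hZ]; abel)

theorem card_add (hA : SubsumDifferences U g A) (hU : ∑ i ∈ U, g i = 0)
    (hB : SubsumDifferences X g B) (hUX : Disjoint U X) (h : ZeroSumInterClosed (U ∪ X) g) :
    #(A + B) = #A * #B := by
  refine card_add_iff.2 ?_
  rintro ⟨a, b⟩ ⟨ha, hb⟩ ⟨a', b'⟩ ⟨ha', hb'⟩ heq
  dsimp only at ha hb ha' hb' heq
  obtain ⟨D, hDU, Z, hZX, hDZ⟩ := hA.exists_sum_eq_sub_pair hU hB ha ha' hb hb'
  have hsum : ∑ i ∈ D ∪ Z, g i = 0 := by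
    rw [sum_union (hUX.mono hDU hZX)]
    rcases hDZ with ⟨hD, hZ⟩ | ⟨hD, hZ⟩
    · rw [hD, hZ, sub_add_sub_comm, heq, sub_self]
    · rw [hD, hZ, sub_add_sub_comm, heq, sub_self]
  have hinter : (D ∪ Z) ∩ U = D := by
    rw [union_inter_distrib_right, inter_eq_left.2 hDU,
      disjoint_iff_inter_eq_empty.1 (hUX.symm.mono_left hZX), union_empty]
  have hD0 : ∑ i ∈ D, g i = 0 :=
    hinter ▸ h (union_subset_union hDU hZX) subset_union_left hsum hU
  have haa' : a = a' := by
    rcases hDZ with ⟨hD, -⟩ | ⟨hD, -⟩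
    · exact sub_eq_zero.1 (hD ▸ hD0)
    · exact (sub_eq_zero.1 (hD ▸ hD0)).symm
  subst haa'
  rw [add_left_cancel heq]

end SubsumDifferences

namespace ZeroSumInterClosed

variable [DecidableEq ι] {X : Finset ι} {g : ι → G}

theorem exists_subsumDifferences (h : ZeroSumInterClosed X g)
    (hne : ∀ x ∈ X, g x ≠ 0) : ∃ W : Finset G, W.Nonempty ∧ (X.Nonempty → 2 ≤ #W) ∧ #X ≤ #W ∧
      SubsumDifferences X g W := by
  classical
  induction hn : #X using Nat.strong_induction_on generalizing X with
  | _ n ih =>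
  subst hn
  by_cases hfree : ZeroSumFree X g
  · obtain ⟨W, hcard, hW⟩ := hfree.exists_subsumDifferences
    refine ⟨W, card_pos.1 (by lia), fun hX => ?_, by lia, hW⟩
    have := hX.card_pos
    lia
  simp only [ZeroSumFree, not_forall, not_not] at hfree
  obtain ⟨J, hJX, hJne, hJ⟩ := hfree
  obtain ⟨U, hUJ, hU⟩ := exists_isZeroSumAtom_subset hJne hJ
  have hUX : U ⊆ X := hUJ.trans hJX
  have hU2 : 1 < #U := one_lt_card_iff_nontrivial.2 (hU.nontrivial fun x hx => hne x (hUX hx))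
  have hcard : #(X \ U) + #U = #X := card_sdiff_add_card_eq_card hUX
  obtain ⟨A, hAcard, hA⟩ := hU.exists_subsumDifferences
  obtain ⟨B, hBne, hB2, hBcard, hB⟩ := ih #(X \ U) (by lia) (h.mono sdiff_subset)
    (fun x hx => hne x (mem_sdiff.1 hx).1) rfl
  have hunion : U ∪ X \ U = X := union_sdiff_of_subset hUX
  have hAB : #(A + B) = #U * #B :=
    hAcard ▸ hA.card_add hU.sum_eq_zero hB disjoint_sdiff (hunion.symm ▸ h)
  have hBpos : 1 ≤ #B := hBne.card_pos
  refine ⟨A + B, card_pos.1 ?_, fun _ => ?_, ?_, hunion ▸ hA.add hU.sum_eq_zero hB disjoint_sdiff⟩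
  · nlinarith
  · nlinarith
  · rcases (X \ U).eq_empty_or_nonempty with he | hne'
    · rw [he, card_empty] at hcard
      nlinarith
    · have := hB2 hne'
      nlinarith

theorem card_le (h : ZeroSumInterClosed X g) (hne : ∀ x ∈ X, g x ≠ 0) (K : AddSubgroup G)
    [Finite K] (hK : ∀ x ∈ X, g x ∈ K) : #X ≤ Nat.card K := by
  obtain ⟨W, -, -, hXW, hW⟩ := h.exists_subsumDifferences hne
  exact hXW.trans (hW.card_le K hK)

theorem card_le_of_map (h : ZeroSumInterClosed X g) (φ : G →+ H) (K : AddSubgroup H) [Finite K]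
    (hne : ∀ x ∈ X, φ (g x) ≠ 0) (hK : ∀ x ∈ X, φ (g x) ∈ K)
    (hφ : ∀ D ⊆ X, #D ≤ Nat.card K → φ (∑ i ∈ D, g i) = 0 → ∑ i ∈ D, g i = 0) :
    #X ≤ Nat.card K := by
  refine (h.map φ fun D hD hD0 => ?_).card_le hne K hK
  rw [map_sum] at hD0
  obtain ⟨P, hP⟩ := exists_finpartition_isZeroSumAtom hD0
  rw [← P.biUnion_parts, sum_biUnion P.disjoint]
  refine sum_eq_zero fun T hT => ?_
  have hTX : T ⊆ X := (P.subset hT).trans hD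
  refine hφ T hTX ((hP T hT).card_le K fun x hx => hK x (hTX hx)) ?_
  rw [map_sum]
  exact (hP T hT).sum_eq_zero

end ZeroSumInterClosed

end SubsumDifferences

section GroupAlgebra

open scoped AddMonoidAlgebra

variable {ι F V : Type*} [Field F] [AddCommGroup V]

variable (F) in
/-- The generator `1 - X^v` of the augmentation ideal of the group algebra `F[V]`. -/
noncomputable def augGen (v : V) : F[V] := 1 - AddMonoidAlgebra.single v 1

variable (F V) in
/-- The augmentation ideal of the group algebra `F[V]`, presented by its generators. -/
noncomputable def augIdeal : Ideal F[V] := Ideal.span (Set.range (augGen F))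

/-- The coefficient at `0 : V`, which detects zero sums. -/
noncomputable def coeffZero : F[V] →ₗ[F] F where
  toFun a := a.coeff 0
  map_add' _ _ := rfl
  map_smul' _ _ := rfl

theorem coeffZero_single [DecidableEq V] (v : V) (r : F) :
    coeffZero (AddMonoidAlgebra.single v r) = if v = 0 then r else 0 :=
  Finsupp.single_apply

theorem coeffZero_one : coeffZero (1 : F[V]) = 1 := by
  classical
  rw [AddMonoidAlgebra.one_def, coeffZero_single, if_pos rfl]

theorem augGen_mem_augIdeal (v : V) : augGen F v ∈ augIdeal F V := Ideal.subset_span ⟨v, rfl⟩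

theorem augGen_add (v w : V) :
    augGen F (v + w) = augGen F v + augGen F w - augGen F v * augGen F w := by
  have h : AddMonoidAlgebra.single (v + w) (1 : F) =
      AddMonoidAlgebra.single v 1 * AddMonoidAlgebra.single w 1 := by
    rw [AddMonoidAlgebra.single_mul_single, one_mul]
  rw [augGen, augGen, augGen, h]
  ring

theorem augGen_nsmul (v : V) (n : ℕ) : augGen F (n • v) = 1 - (1 - augGen F v) ^ n := by
  simp [augGen, AddMonoidAlgebra.single_pow]

theorem exists_sub_algebraMap_mem_augIdeal (a : F[V]) :
    ∃ c : F, a - algebraMap F F[V] c ∈ augIdeal F V := by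
  induction a using AddMonoidAlgebra.induction_linear with
  | zero => exact ⟨0, by simp⟩
  | add a b ha hb =>
    obtain ⟨c, hc⟩ := ha
    obtain ⟨d, hd⟩ := hb
    refine ⟨c + d, ?_⟩
    rw [map_add, add_sub_add_comm]
    exact add_mem hc hd
  | single v r =>
    have h : AddMonoidAlgebra.single v r - algebraMap F F[V] r = -r • augGen F v := by
      simp [augGen, AddMonoidAlgebra.one_def, smul_sub, -neg_smul, neg_add_eq_sub]
    exact ⟨r, h ▸ Submodule.smul_of_tower_mem _ _ (augGen_mem_augIdeal v)⟩

variable (F) in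
/-- The span of the monomials `X^σ` with `σ` a sum over a subfamily of `P`. -/
noncomputable def subsumSpan (g : ι → V) (P : Finset ι) : Submodule F F[V] :=
  Submodule.span F ((fun J => AddMonoidAlgebra.single (∑ i ∈ J, g i) 1) '' {J | J ⊆ P})

variable {g : ι → V} {P P' W T s : Finset ι} {a b : F[V]}

theorem single_sum_mem_subsumSpan {J : Finset ι} (hJ : J ⊆ P) :
    AddMonoidAlgebra.single (∑ i ∈ J, g i) 1 ∈ subsumSpan F g P :=
  Submodule.subset_span ⟨J, hJ, rfl⟩

theorem one_mem_subsumSpan : (1 : F[V]) ∈ subsumSpan F g P :=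
  single_sum_mem_subsumSpan (empty_subset P)

theorem subsumSpan_mono (h : P ⊆ P') : subsumSpan F g P ≤ subsumSpan F g P' :=
  Submodule.span_mono (Set.image_mono fun _ hJ => hJ.trans h)

theorem augGen_mem_subsumSpan (i : ι) : augGen F (g i) ∈ subsumSpan F g {i} :=
  sub_mem one_mem_subsumSpan (sum_singleton g i ▸ single_sum_mem_subsumSpan Subset.rfl)

theorem prod_augGen_mem_pow : ∏ i ∈ W, augGen F (g i) ∈ augIdeal F V ^ #W := by
  rw [← prod_const]
  exact Ideal.prod_mem_prod fun i _ => augGen_mem_augIdeal (g i)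

variable (F) in
/-- A subfamily whose subsums support an element with nonzero coefficient at `0` lying as deep in
the powers of the augmentation ideal as the product `∏ (1 - X^{g i})` does. -/
def IsFull (g : ι → V) (P : Finset ι) : Prop :=
  ∃ a ∈ subsumSpan F g P, a ∈ augIdeal F V ^ #P ∧ coeffZero a ≠ 0

theorem isFull_empty : IsFull F g ∅ :=
  ⟨1, one_mem_subsumSpan, by simp, by simp [coeffZero_one]⟩

theorem mul_mem_subsumSpan [DecidableEq ι] (h : Disjoint P P') (ha : a ∈ subsumSpan F g P)
    (hb : b ∈ subsumSpan F g P') : a * b ∈ subsumSpan F g (P ∪ P') := by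
  refine Submodule.mul_le.1 ?_ a ha b hb
  rw [subsumSpan, subsumSpan, Submodule.span_mul_span, Submodule.span_le]
  rintro _ ⟨_, ⟨J, hJ, rfl⟩, _, ⟨J', hJ', rfl⟩, rfl⟩
  dsimp only
  rw [SetLike.mem_coe, AddMonoidAlgebra.single_mul_single, one_mul, ← sum_union (h.mono hJ hJ')]
  exact single_sum_mem_subsumSpan (union_subset_union hJ hJ')

theorem prod_augGen_mem_subsumSpan : ∏ i ∈ W, augGen F (g i) ∈ subsumSpan F g W := by
  classical
  induction W using Finset.induction_on with
  | empty => exact one_mem_subsumSpan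
  | insert x W hx ih =>
    rw [prod_insert hx, insert_eq]
    exact mul_mem_subsumSpan (disjoint_singleton_left.2 hx) (augGen_mem_subsumSpan x) ih

theorem ZeroSumFree.coeffZero_prod_augGen (h : ZeroSumFree W g) :
    coeffZero (∏ i ∈ W, augGen F (g i)) = 1 := by
  classical
  induction W using Finset.induction_on with
  | empty => exact coeffZero_one
  | insert x W hx ih =>
    have vanish (a : F[V]) (ha : a ∈ subsumSpan F g W) :
        coeffZero (AddMonoidAlgebra.single (g x) 1 * a) = 0 := by
      induction ha using Submodule.span_induction with
      | mem a ha =>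
        obtain ⟨J, hJ, rfl⟩ := ha
        rw [AddMonoidAlgebra.single_mul_single, ← sum_insert fun hxJ => hx (hJ hxJ),
          coeffZero_single, if_neg (h (insert_subset_insert x hJ) (insert_nonempty x J))]
      | zero => simp
      | add a b _ _ ha hb => rw [mul_add, map_add, ha, hb, add_zero]
      | smul r a _ ha => rw [mul_smul_comm, map_smul, ha, smul_zero]
    rw [prod_insert hx, augGen, sub_mul, one_mul, map_sub, vanish _ prod_augGen_mem_subsumSpan,
      sub_zero, ih fun J hJ => h (hJ.trans (subset_insert x W))]

variable [DecidableEq ι]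

theorem coeffZero_mul (h : ZeroSumInterClosed s g) (hP : P ⊆ s) (hP' : P' ⊆ s)
    (hdisj : Disjoint P P') (hP0 : ∑ i ∈ P, g i = 0) (ha : a ∈ subsumSpan F g P)
    (hb : b ∈ subsumSpan F g P') : coeffZero (a * b) = coeffZero a * coeffZero b := by
  classical
  induction ha, hb using Submodule.span_induction₂ with
  | mem_mem a b ha hb =>
    obtain ⟨J, hJ, rfl⟩ := ha
    obtain ⟨J', hJ', rfl⟩ := hb
    have split : ∑ i ∈ J, g i + ∑ i ∈ J', g i = 0 ↔ ∑ i ∈ J, g i = 0 ∧ ∑ i ∈ J', g i = 0 := by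
      refine ⟨fun h0 => ?_, fun h0 => by rw [h0.1, h0.2, add_zero]⟩
      have hinter : (J ∪ J') ∩ P = J := by
        rw [union_inter_distrib_right, inter_eq_left.2 hJ,
          disjoint_iff_inter_eq_empty.1 (hdisj.symm.mono_left hJ'), union_empty]
      have hJ0 : ∑ i ∈ J, g i = 0 := by
        rw [← sum_union (hdisj.mono hJ hJ')] at h0
        exact hinter ▸ h (union_subset (hJ.trans hP) (hJ'.trans hP')) hP h0 hP0
      exact ⟨hJ0, by rwa [hJ0, zero_add] at h0⟩
    simp only [AddMonoidAlgebra.single_mul_single, coeffZero_single, split, one_mul, ite_and,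
      ite_mul, zero_mul]
  | zero_left | zero_right => simp
  | add_left a a' b _ _ _ h h' => rw [add_mul, map_add, h, h', map_add, add_mul]
  | add_right a b b' _ _ _ h h' => rw [mul_add, map_add, h, h', map_add, mul_add]
  | smul_left r a b _ _ h => rw [smul_mul_assoc, map_smul, h, map_smul, smul_mul_assoc]
  | smul_right r a b _ _ h => rw [mul_smul_comm, map_smul, h, map_smul, mul_smul_comm]

theorem IsFull.union (h : ZeroSumInterClosed s g) (hPs : P ⊆ s) (hPs' : P' ⊆ s)
    (hdisj : Disjoint P P') (hP0 : ∑ i ∈ P, g i = 0) (hP : IsFull F g P) (hP' : IsFull F g P') :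
    IsFull F g (P ∪ P') := by
  obtain ⟨a, ha, haI, ha0⟩ := hP
  obtain ⟨b, hb, hbI, hb0⟩ := hP'
  refine ⟨a * b, mul_mem_subsumSpan hdisj ha hb, ?_, ?_⟩
  · rw [card_union_of_disjoint hdisj, pow_add]
    exact Ideal.mul_mem_mul haI hbI
  · rw [coeffZero_mul h hPs hPs' hdisj hP0 ha hb]
    exact mul_ne_zero ha0 hb0

theorem coeffZero_prod_augGen_eq_zero (h : ZeroSumInterClosed s g) (hW : W ⊆ s) (hTW : T ⊆ W)
    (hT0 : ∑ i ∈ T, g i = 0) (hT : ¬IsFull F g T) : coeffZero (∏ i ∈ W, augGen F (g i)) = 0 := by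
  have hprod : coeffZero (∏ i ∈ T, augGen F (g i)) = 0 := by
    by_contra hne
    exact hT ⟨_, prod_augGen_mem_subsumSpan, prod_augGen_mem_pow, hne⟩
  rw [← prod_sdiff hTW, mul_comm, coeffZero_mul h (hTW.trans hW) (sdiff_subset.trans hW)
    disjoint_sdiff hT0 prod_augGen_mem_subsumSpan prod_augGen_mem_subsumSpan, hprod, zero_mul]

theorem cube_dvd_of_one_sub_pow {R : Type*} [CommRing R] (t : R) (l : ℕ) :
    t ^ 3 ∣ ((l - 1) * t + 2) * (1 - (1 - t) ^ l) - 2 * l * t := by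
  suffices t ^ 2 ∣ 1 - (1 - t) ^ l - l * t ∧
      t ^ 3 ∣ ((l - 1) * t + 2) * (1 - (1 - t) ^ l) - 2 * l * t from this.2
  induction l with
  | zero => simp
  | succ l ih =>
    obtain ⟨⟨a, ha⟩, b, hb⟩ := ih
    refine ⟨⟨(1 - t) * a - l, ?_⟩, b - (1 + l * t) * a - l ^ 2, ?_⟩
    · push_cast
      linear_combination (1 - t) * ha
    · push_cast
      linear_combination hb - (t + l * t ^ 2) * ha

theorem ZeroSumInterClosed.zeroSumFree_of_subset_union (h : ZeroSumInterClosed s g)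
    (hT : IsZeroSumAtom g T) (hT' : IsZeroSumAtom g T') (hTs : T ⊆ s) (hTs' : T' ⊆ s)
    (hW : W ⊆ T ∪ T') {x y : ι} (hx : x ∈ T) (hxW : x ∉ W) (hy : y ∈ T') (hyW : y ∉ W) :
    ZeroSumFree W g := by
  refine h.zeroSumFree (hW.trans (union_subset hTs hTs')) fun z hz => ?_
  rcases mem_union.1 (hW hz) with hzT | hzT'
  · exact ⟨T, hTs, hT, hzT, fun hTW => hxW (hTW hx)⟩
  · exact ⟨T', hTs', hT', hzT', fun hTW => hyW (hTW hy)⟩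

theorem IsZeroSumAtom.isFull_union_of_eq_nsmul (h : ZeroSumInterClosed s g) (hT : IsZeroSumAtom g T)
    (hT' : IsZeroSumAtom g T') (hTs : T ⊆ s) (hTs' : T' ⊆ s) (hdisj : Disjoint T T')
    (hfull : ¬IsFull F g T') (hnt : T.Nontrivial) {b c : ι} (hb : b ∈ T) (hc : c ∈ T') {l : ℕ}
    (hbc : g c = l • g b) (hl : (2 * l : F) ≠ 0) : IsFull F g (T ∪ T') := by
  obtain ⟨b', hb', hne⟩ := hnt.exists_ne b
  set W := (T ∪ T') \ {b', b, c} with hW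
  have hbcW : b ∉ insert c W := by grind [disjoint_left]
  have hcW : c ∉ W := by grind
  have hbW : b ∉ W := by grind
  have hcard : #(T ∪ T') = #W + 3 := by
    rw [hW, ← card_sdiff_add_card_eq_card (show {b', b, c} ⊆ T ∪ T' by grind),
      card_eq_three.2 ⟨b', b, c, hne, by grind [disjoint_left], by grind [disjoint_left], rfl⟩]
  have hsub : insert b (insert c W) ⊆ T ∪ T' := by grind
  have hsub' : insert c W ⊆ T ∪ T' := by grind
  have hsub'' : insert b W ⊆ T ∪ T' := by grind
  have hs : T ∪ T' ⊆ s := union_subset hTs hTs'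
  have hT'W : T' ⊆ insert c W := by grind [disjoint_left]
  have hfree : ZeroSumFree (insert b W) g :=
    h.zeroSumFree_of_subset_union hT hT' hTs hTs' hsub'' hb' (by grind) hc
      (by grind [disjoint_left])
  -- By `hbc` the second factor `1 - X^{g c}` is a polynomial in `t = 1 - X^{g b}` starting
  -- `l t - l (l - 1) / 2 t²`; the combination is chosen to cancel the terms of degree below `3`.
  refine ⟨((l : ℤ) - 1) • ∏ i ∈ insert b (insert c W), augGen F (g i) +
      (2 : ℤ) • ∏ i ∈ insert c W, augGen F (g i) -
      (2 * l : ℤ) • ∏ i ∈ insert b W, augGen F (g i), ?_, ?_, ?_⟩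
  · refine sub_mem (add_mem ?_ ?_) ?_ <;>
      exact zsmul_mem (subsumSpan_mono (by assumption) prod_augGen_mem_subsumSpan) _
  · obtain ⟨r, hr⟩ := cube_dvd_of_one_sub_pow (augGen F (g b)) l
    have hcube : augGen F (g b) ^ 3 * r * ∏ i ∈ W, augGen F (g i) ∈ augIdeal F V ^ #(T ∪ T') := by
      rw [hcard, add_comm, pow_add]
      exact Ideal.mul_mem_mul (Ideal.mul_mem_right _ _
        (Ideal.pow_mem_pow (augGen_mem_augIdeal _) 3)) prod_augGen_mem_pow
    convert hcube using 1
    simp only [prod_insert hbcW, prod_insert hcW, prod_insert hbW, hbc, augGen_nsmul, zsmul_eq_mul]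
    push_cast
    linear_combination (∏ i ∈ W, augGen F (g i)) * hr
  · rw [map_sub, map_add, map_zsmul, map_zsmul, map_zsmul, hfree.coeffZero_prod_augGen,
      coeffZero_prod_augGen_eq_zero h (hsub.trans hs) (hT'W.trans (subset_insert b _))
        hT'.sum_eq_zero hfull,
      coeffZero_prod_augGen_eq_zero h (hsub'.trans hs) hT'W hT'.sum_eq_zero hfull]
    simpa using hl

end GroupAlgebra

section UniqueFactorizationLength

open scoped AddMonoidAlgebra

theorem forall_mem_ideal_eq_zero_of_prod_eq_zero {F R κ : Type*} [Field F] [CommRing R]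
    [Algebra F R] {I : Ideal R} (hI : ∀ r : R, ∃ c : F, r - algebraMap F R c ∈ I) {z : κ → R}
    {B : Finset κ} (hz : ∀ i ∈ B, z i ∈ I)
    (hpair : ∀ i ∈ B, ∀ j ∈ B, i ≠ j → I ≤ Ideal.span {z i, z j}) {ν : R →ₗ[F] F}
    (hpow : ∀ r ∈ I ^ #B, ν r = 0) (hprod : ∀ C ⊆ B, C.Nonempty → ν (∏ i ∈ C, z i) = 0) :
    ∀ r ∈ I, ν r = 0 := by
  classical
  induction hn : #B generalizing B ν with
  | zero => exact fun r _ => hpow r (by simp [hn])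
  | succ n ih =>
  rw [hn] at hpow
  rcases n.eq_zero_or_pos with rfl | hpos
  · simpa using hpow
  have key (k : κ) (hk : k ∈ B) (r : R) : ν (z k * r) = 0 := by
    have hcard : #(B.erase k) = n := by rw [card_erase_of_mem hk, hn, Nat.add_sub_cancel]
    have hmem {i : κ} (hi : i ∈ B.erase k) : i ∈ B := mem_of_mem_erase hi
    have hνI : ∀ r ∈ I, ν (z k * r) = 0 := by
      refine ih (ν := ν ∘ₗ LinearMap.mulLeft F (z k)) (fun i hi => hz i (hmem hi))
        (fun i hi j hj => hpair i (hmem hi) j (hmem hj)) (fun r hr => hpow _ ?_)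
        (fun C hC _ => ?_) hcard
      · rw [hcard] at hr
        exact pow_succ' I n ▸ Ideal.mul_mem_mul (hz k hk) hr
      · have hkC : k ∉ C := fun h => notMem_erase k B (hC h)
        rw [LinearMap.comp_apply, LinearMap.mulLeft_apply, ← prod_insert hkC]
        exact hprod _ (insert_subset hk (hC.trans (erase_subset k B))) (insert_nonempty k C)
    obtain ⟨c, hc⟩ := hI r
    have hk0 : ν (z k) = 0 := by simpa using hprod {k} (by simpa using hk) (by simp)
    rw [← sub_add_cancel r (algebraMap F R c), mul_add, map_add, hνI _ hc, mul_comm,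
      ← Algebra.smul_def, map_smul, hk0, smul_zero, add_zero]
  obtain ⟨i, hi, j, hj, hij⟩ := one_lt_card.1 (show 1 < #B by lia)
  intro r hr
  obtain ⟨a, b, rfl⟩ := Ideal.mem_span_pair.1 (hpair i hi j hj hij hr)
  rw [map_add, mul_comm a, mul_comm b, key i hi, key j hj, add_zero]

variable {ι F V : Type*} [Field F] [AddCommGroup V] {s T T' : Finset ι} {g : ι → V}

/-- A set of representatives of the minimal zero-sum subfamilies of `s`. -/
structure IsTransversal (s : Finset ι) (g : ι → V) (r : Finset ι) : Prop where
  subset : r ⊆ s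
  existsUnique_mem : ∀ T ⊆ s, IsZeroSumAtom g T → ∃! i, i ∈ r ∧ i ∈ T

theorem IsTransversal.eq_of_mem {r : Finset ι} (hr : IsTransversal s g r) (hTs : T ⊆ s)
    (hT : IsZeroSumAtom g T) {i j : ι} (hi : i ∈ r) (hiT : i ∈ T) (hj : j ∈ r) (hjT : j ∈ T) :
    i = j :=
  (hr.existsUnique_mem T hTs hT).unique ⟨hi, hiT⟩ ⟨hj, hjT⟩

variable [DecidableEq ι]

theorem IsUF.exists_isZeroSumAtom_mem (h : IsUF s g) {x : ι} (hx : x ∈ s) :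
    ∃ T ⊆ s, IsZeroSumAtom g T ∧ x ∈ T := by
  obtain ⟨P, hP⟩ := exists_finpartition_isZeroSumAtom h.sum_eq_zero
  obtain ⟨T, hT, hxT⟩ := P.exists_mem hx
  exact ⟨T, P.subset hT, hP T hT, hxT⟩

theorem IsUF.exists_isTransversal (h : IsUF s g) : ∃ r, IsTransversal s g r := by
  obtain ⟨P, hP⟩ := exists_finpartition_isZeroSumAtom h.sum_eq_zero
  obtain ⟨r, hrs, -, hinj, hsurj⟩ := P.exists_subset_part_bijOn
  refine ⟨r, hrs, fun T hTs hT => ?_⟩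
  obtain ⟨x, hx⟩ := hT.nonempty
  obtain ⟨T', hT', hxT'⟩ := P.exists_mem (hTs hx)
  obtain rfl := h.interClosed.eq_of_mem hT (hP T' hT') hTs (P.subset hT') hx hxT'
  obtain ⟨i, hi, hiT⟩ := hsurj hT'
  refine ⟨i, ⟨hi, (P.part_eq_iff_mem hT').1 hiT⟩, fun j hj => hinj hj.1 hi ?_⟩
  rw [hiT, P.part_eq_of_mem hT' hj.2]

theorem IsTransversal.exists_isZeroSumAtom_pair {r : Finset ι} (hr : IsTransversal s g r)
    (h : IsUF s g) (hs : s.Nonempty) (hne : ∀ i ∈ s, g i ≠ 0) :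
    ∃ T ⊆ s, IsZeroSumAtom g T ∧ ∃ x ∈ T, ∃ x' ∈ T, x ∈ s \ r ∧ x' ∈ r := by
  obtain ⟨x₀, hx₀⟩ := hs
  obtain ⟨T, hTs, hT, -⟩ := h.exists_isZeroSumAtom_mem hx₀
  obtain ⟨x', ⟨hx'r, hx'⟩, -⟩ := hr.existsUnique_mem T hTs hT
  obtain ⟨x, hx, hxx'⟩ := (hT.nontrivial fun i hi => hne i (hTs hi)).exists_ne x'
  exact ⟨T, hTs, hT, x, hx, x', hx',
    mem_sdiff.2 ⟨hTs hx, fun hxr => hxx' (hr.eq_of_mem hTs hT hxr hx hx'r hx')⟩, hx'r⟩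

theorem IsTransversal.zeroSumFree_sdiff {r : Finset ι} (hr : IsTransversal s g r) :
    ZeroSumFree (s \ r) g := by
  refine zeroSumFree_of_forall_not_isZeroSumAtom fun T hT hTa => ?_
  obtain ⟨i, ⟨hir, hiT⟩, -⟩ := hr.existsUnique_mem T (hT.trans sdiff_subset) hTa
  exact (mem_sdiff.1 (hT hiT)).2 hir

theorem ZeroSumInterClosed.apply_ne_of_mem (h : ZeroSumInterClosed s g) (hT : IsZeroSumAtom g T)
    (hTs : T ⊆ s) (hnt : T.Nontrivial) {x y : ι} (hx : x ∈ T) (hy : y ∈ s) (hyT : y ∉ T) :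
    g x ≠ g y := by
  intro hxy
  have hyE : y ∉ T.erase x := fun h => hyT (mem_of_mem_erase h)
  have hswap : ∑ i ∈ insert y (T.erase x), g i = 0 := by
    rw [sum_insert hyE, ← hxy, add_sum_erase T g hx, hT.sum_eq_zero]
  rcases h.subset_or_disjoint hT hTs (insert_subset hy ((erase_subset x T).trans hTs)) hswap
    with hsub | hdisj
  · have := hsub hx
    grind
  · obtain ⟨z, hz, hzx⟩ := hnt.exists_ne x
    exact disjoint_left.1 hdisj hz (mem_insert_of_mem (mem_erase.2 ⟨hzx, hz⟩))

theorem IsTransversal.coeffZero_prod_augGen_union_eq_zero {r : Finset ι} (h : IsUF s g)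
    (hr : IsTransversal s g r) (hfull : ∀ T ⊆ s, IsZeroSumAtom g T → ¬IsFull F g T)
    (hT' : IsZeroSumAtom g T') (hTs' : T' ⊆ s) {x x' : ι} (hx : x ∈ T') (hx' : x' ∈ T')
    (hx'r : x' ∈ r) {C : Finset ι} (hC : C ⊆ r.erase x') (hne : C.Nonempty) :
    coeffZero (∏ i ∈ (s \ r).erase x ∪ C, augGen F (g i)) = 0 := by
  obtain ⟨i, hi⟩ := hne
  obtain ⟨hix', hir⟩ := mem_erase.1 (hC hi)
  obtain ⟨T, hTs, hT, hiT⟩ := h.exists_isZeroSumAtom_mem (hr.subset hir)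
  have hxT : x ∉ T := by
    intro hxT
    obtain rfl := h.interClosed.eq_of_mem hT hT' hTs hTs' hxT hx
    exact hix' (hr.eq_of_mem hTs hT hir hiT hx'r hx')
  have hTC : T ⊆ (s \ r).erase x ∪ C := by
    intro j hj
    by_cases hjr : j ∈ r
    · obtain rfl := hr.eq_of_mem hTs hT hjr hj hir hiT
      exact mem_union_right _ hi
    · refine mem_union_left _ (mem_erase.2 ⟨?_, mem_sdiff.2 ⟨hTs hj, hjr⟩⟩)
      rintro rfl
      exact hxT hj
  have hCs : (s \ r).erase x ∪ C ⊆ s := union_subset ((erase_subset x _).trans sdiff_subset)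
    (hC.trans ((erase_subset x' r).trans hr.subset))
  exact coeffZero_prod_augGen_eq_zero h.interClosed hCs hTC hT.sum_eq_zero (hfull T hTs hT)

theorem IsUF.exists_mem_augIdeal_pow (h : IsUF s g) (hs : s.Nonempty) (hne : ∀ i ∈ s, g i ≠ 0)
    (hfull : ∀ T ⊆ s, IsZeroSumAtom g T → ¬IsFull F g T)
    (hgen : ∀ x ∈ s, ∀ y ∈ s, (∀ T ⊆ s, IsZeroSumAtom g T → x ∈ T → y ∉ T) →
      augIdeal F V ≤ Ideal.span {augGen F (g x), augGen F (g y)})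
    (ν : F[V] →ₗ[F] F) (hν : ∀ a ∈ subsumSpan F g s, ν a = 0 ↔ coeffZero a = 0) :
    ∃ a ∈ augIdeal F V ^ (#s - 2), ν a ≠ 0 := by
  by_contra! hzero
  obtain ⟨r, hr⟩ := h.exists_isTransversal
  obtain ⟨T, hTs, hT, x, hx, x', hx', hxr, hx'r⟩ := hr.exists_isZeroSumAtom_pair h hs hne
  let D := (s \ r).erase x
  have hcard : #D + #(r.erase x') = #s - 2 := by
    have := card_sdiff_add_card_eq_card hr.subset
    have := card_erase_add_one hxr
    have := card_erase_add_one hx'r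
    lia
  have hDs : D ⊆ s := (erase_subset x _).trans sdiff_subset
  have hpow : ∏ i ∈ D, augGen F (g i) ∈ augIdeal F V ^ #D := prod_augGen_mem_pow
  have hνI := forall_mem_ideal_eq_zero_of_prod_eq_zero (I := augIdeal F V)
    (z := fun i => augGen F (g i)) (B := r.erase x')
    (ν := ν ∘ₗ LinearMap.mulLeft F (∏ i ∈ D, augGen F (g i))) exists_sub_algebraMap_mem_augIdeal
    (fun i _ => augGen_mem_augIdeal (g i)) (fun i hi j hj hij => ?_)
    (fun a ha => hzero _ (hcard ▸ pow_add (augIdeal F V) _ _ ▸ Ideal.mul_mem_mul hpow ha))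
    (fun C hC hCne => ?_) (augGen F (g x)) (augGen_mem_augIdeal (g x))
  · rw [LinearMap.comp_apply, LinearMap.mulLeft_apply, mul_comm,
      mul_prod_erase (s \ r) (fun i => augGen F (g i)) hxr,
      hν _ (subsumSpan_mono sdiff_subset prod_augGen_mem_subsumSpan),
      hr.zeroSumFree_sdiff.coeffZero_prod_augGen] at hνI
    exact one_ne_zero hνI
  · exact hgen i (hr.subset (mem_of_mem_erase hi)) j (hr.subset (mem_of_mem_erase hj))
      fun T hTs hT hiT hjT => hij <|
        hr.eq_of_mem hTs hT (mem_of_mem_erase hi) hiT (mem_of_mem_erase hj) hjT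
  · have hCr : C ⊆ r := hC.trans (erase_subset x' r)
    have hdisj : Disjoint D C := sdiff_disjoint.mono (erase_subset x _) hCr
    rw [LinearMap.comp_apply, LinearMap.mulLeft_apply, ← prod_union hdisj,
      hν _ (subsumSpan_mono (union_subset hDs (hCr.trans hr.subset)) prod_augGen_mem_subsumSpan)]
    exact hr.coeffZero_prod_augGen_union_eq_zero h hfull hT hTs hx hx' hx'r hC hCne

theorem exists_maximal_isFull (h : ZeroSumInterClosed s g) :
    ∃ P ⊆ s, ∑ i ∈ P, g i = 0 ∧ IsFull F g P ∧
      ∀ U ⊆ s \ P, U.Nonempty → ∑ i ∈ U, g i = 0 → ¬IsFull F g U := by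
  obtain ⟨P, -, ⟨hPs, hP0, hPfull⟩, hPmax⟩ :=
    (s.powerset.finite_toSet.subset fun P hP => mem_powerset.2 hP.1 :
      {P | P ⊆ s ∧ ∑ i ∈ P, g i = 0 ∧ IsFull F g P}.Finite).exists_le_maximal
      ⟨empty_subset s, sum_empty, isFull_empty⟩
  refine ⟨P, hPs, hP0, hPfull, fun U hU hne hU0 hUfull => ?_⟩
  have hdisj : Disjoint P U := disjoint_sdiff.mono_right hU
  have hUs : U ⊆ s := hU.trans sdiff_subset
  have hUP : U ⊆ P := subset_union_right.trans <| hPmax ⟨union_subset hPs hUs,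
    by rw [sum_union hdisj, hP0, hU0, add_zero],
    hPfull.union h hPs hUs hdisj hP0 hUfull⟩ subset_union_left
  exact hne.ne_empty (hdisj.eq_bot_of_ge hUP)

theorem IsUF.exists_isFull_of_eq_nsmul (h : IsUF s g) (hne : ∀ i ∈ s, g i ≠ 0) {x y : ι}
    (hx : x ∈ s) (hy : y ∈ s) (hxy : ∀ T ⊆ s, IsZeroSumAtom g T → x ∈ T → y ∉ T) {l : ℕ}
    (hl : g y = l • g x) (h2l : (2 * l : F) ≠ 0) :
    ∃ U ⊆ s, U.Nonempty ∧ ∑ i ∈ U, g i = 0 ∧ IsFull F g U := by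
  obtain ⟨T, hTs, hT, hxT⟩ := h.exists_isZeroSumAtom_mem hx
  obtain ⟨T', hTs', hT', hyT'⟩ := h.exists_isZeroSumAtom_mem hy
  have hdisj : Disjoint T T' := (h.interClosed.subset_or_disjoint hT' hTs' hTs
    hT.sum_eq_zero).resolve_left (fun hsub => hxy T hTs hT hxT (hsub hyT')) |>.symm
  by_cases hfull : IsFull F g T'
  · exact ⟨T', hTs', hT'.nonempty, hT'.sum_eq_zero, hfull⟩
  refine ⟨T ∪ T', union_subset hTs hTs', ⟨x, mem_union_left _ hxT⟩, ?_,
    hT.isFull_union_of_eq_nsmul h.interClosed hT' hTs hTs' hdisj hfull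
      (hT.nontrivial fun i hi => hne i (hTs hi)) hxT hyT' hl h2l⟩
  rw [sum_union hdisj, hT.sum_eq_zero, hT'.sum_eq_zero, add_zero]

theorem IsUF.card_le_of_augIdeal_pow_eq_bot (h : IsUF s g) (hne : ∀ i ∈ s, g i ≠ 0) {N : ℕ}
    (hN : augIdeal F V ^ N = ⊥)
    (hpair : ∀ b c : V, b ≠ 0 → c ≠ 0 → b ≠ c →
      augIdeal F V ≤ Ideal.span {augGen F b, augGen F c} ∨ ∃ l : ℕ, c = l • b ∧ (2 * l : F) ≠ 0) :
    #s ≤ N + 1 := by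
  by_contra! hlt
  obtain ⟨P, hPs, hP0, ⟨a, ha, haI, ha0⟩, not_isFull⟩ :=
    exists_maximal_isFull (F := F) h.interClosed
  have hcard : #(s \ P) + #P = #s := card_sdiff_add_card_eq_card hPs
  obtain ⟨b, hbI, hab⟩ : ∃ b ∈ augIdeal F V ^ (#(s \ P) - 2), coeffZero (a * b) ≠ 0 := by
    rcases (s \ P).eq_empty_or_nonempty with he | hs'
    · exact ⟨1, by simp [he], by rwa [mul_one]⟩
    have h' : IsUF (s \ P) g := h.sdiff hPs hP0
    have hne' : ∀ i ∈ s \ P, g i ≠ 0 := fun i hi => hne i (mem_sdiff.1 hi).1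
    refine h'.exists_mem_augIdeal_pow hs' hne'
      (fun T hT hTa => not_isFull T hT hTa.nonempty hTa.sum_eq_zero) (fun x hx y hy hxy => ?_)
      (coeffZero ∘ₗ LinearMap.mulLeft F a) fun b hb => ?_
    · refine (hpair (g x) (g y) (hne' x hx) (hne' y hy) ?_).resolve_right ?_
      · obtain ⟨T, hTs, hT, hxT⟩ := h'.exists_isZeroSumAtom_mem hx
        exact h'.interClosed.apply_ne_of_mem hT hTs (hT.nontrivial fun i hi => hne' i (hTs hi)) hxT
          hy (hxy T hTs hT hxT)
      · rintro ⟨l, hl, h2l⟩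
        obtain ⟨U, hU, hUne, hU0, hUfull⟩ := h'.exists_isFull_of_eq_nsmul hne' hx hy hxy hl h2l
        exact not_isFull U hU hUne hU0 hUfull
    · rw [LinearMap.comp_apply, LinearMap.mulLeft_apply,
        coeffZero_mul h.interClosed hPs sdiff_subset disjoint_sdiff hP0 ha hb, mul_eq_zero,
        or_iff_right ha0]
  have habN : a * b ∈ augIdeal F V ^ N := by
    refine Ideal.pow_le_pow_right (show N ≤ #P + (#(s \ P) - 2) by lia) ?_
    exact pow_add (augIdeal F V) _ _ ▸ Ideal.mul_mem_mul haI hbI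
  rw [hN, Ideal.mem_bot] at habN
  exact hab (by rw [habN, map_zero])

theorem span_pair_pow_eq_bot {R : Type*} [CommRing R] {u v : R} {n : ℕ} (hu : u ^ n = 0)
    (hv : v ^ n = 0) : Ideal.span {u, v} ^ (2 * n - 1) = ⊥ := by
  rw [Ideal.span_insert, ← Ideal.add_eq_sup, add_pow]
  refine sum_eq_zero fun m _ => ?_
  rw [Ideal.span_singleton_pow, Ideal.span_singleton_pow]
  rcases le_or_gt n m with hnm | hmn
  · simp [pow_eq_zero_of_le hnm hu]
  · simp [pow_eq_zero_of_le (show n ≤ 2 * n - 1 - m by lia) hv]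

theorem augIdeal_le_span_pair {b c : V} (h : ∀ v : V, ∃ i j : ℕ, v = i • b + j • c) :
    augIdeal F V ≤ Ideal.span {augGen F b, augGen F c} := by
  have mem_span {u : V} (hu : augGen F u ∈ Ideal.span {augGen F b, augGen F c}) (i : ℕ) :
      augGen F (i • u) ∈ Ideal.span {augGen F b, augGen F c} := by
    refine Ideal.mem_of_dvd _ ?_ hu
    simpa [augGen_nsmul] using sub_dvd_pow_sub_pow 1 (1 - augGen F u) i
  rw [augIdeal, Ideal.span_le]
  rintro _ ⟨v, rfl⟩
  obtain ⟨i, j, rfl⟩ := h v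
  have hb := mem_span (Ideal.subset_span (Set.mem_insert _ _)) i
  have hc := mem_span (Ideal.subset_span (Set.mem_insert_of_mem _ rfl)) j
  rw [SetLike.mem_coe, augGen_add]
  exact sub_mem (add_mem hb hc) (Ideal.mul_mem_right _ _ hb)

section Plane

variable {q : ℕ} [Fact q.Prime] [Module (ZMod q) V]

theorem augGen_pow_eq_zero (v : V) : augGen (ZMod q) v ^ q = 0 := by
  have : CharP (ZMod q)[V] q :=
    charP_of_injective_algebraMap (algebraMap (ZMod q) _).injective q
  have hqv : q • v = 0 := by rw [← Nat.cast_smul_eq_nsmul (ZMod q), CharP.cast_eq_zero, zero_smul]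
  rw [augGen, sub_pow_char, one_pow, AddMonoidAlgebra.single_pow, hqv, one_pow,
    ← AddMonoidAlgebra.one_def, sub_self]

theorem val_nsmul_eq_smul (t : ZMod q) (v : V) : t.val • v = t • v := by
  rw [← Nat.cast_smul_eq_nsmul (ZMod q), ZMod.natCast_zmod_val]

theorem exists_nsmul_add_nsmul (hV : Module.finrank (ZMod q) V = 2) {b c : V}
    (hbc : LinearIndependent (ZMod q) ![b, c]) (v : V) : ∃ i j : ℕ, v = i • b + j • c := by
  have hspan := hbc.span_eq_top_of_card_eq_finrank (by simp [hV])
  rw [Matrix.range_cons_cons_empty] at hspan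
  obtain ⟨i, j, hij⟩ := Submodule.mem_span_pair.1 (hspan ▸ Submodule.mem_top : v ∈ _)
  exact ⟨i.val, j.val, by rw [val_nsmul_eq_smul, val_nsmul_eq_smul, hij]⟩

theorem IsUF.card_le_two_mul (h : IsUF s g) (hne : ∀ i ∈ s, g i ≠ 0)
    (hV : Module.finrank (ZMod q) V = 2) : #s ≤ 2 * q := by
  have hpair {b c : V} (hbc : LinearIndependent (ZMod q) ![b, c]) :
      augIdeal (ZMod q) V ≤ Ideal.span {augGen (ZMod q) b, augGen (ZMod q) c} :=
    augIdeal_le_span_pair (exists_nsmul_add_nsmul hV hbc)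
  have hpow : augIdeal (ZMod q) V ^ (2 * q - 1) = ⊥ := by
    have := Module.finite_of_finrank_pos (hV ▸ two_pos)
    have B := Module.finBasisOfFinrankEq (ZMod q) V hV
    have hB : LinearIndependent (ZMod q) ![B 0, B 1] := by
      convert B.linearIndependent using 1
      ext i
      fin_cases i <;> rfl
    rw [eq_bot_iff, ← span_pair_pow_eq_bot (augGen_pow_eq_zero (B 0)) (augGen_pow_eq_zero (B 1))]
    exact Ideal.pow_right_mono (hpair hB) _
  have hq : 2 ≤ q := (Fact.out : q.Prime).two_le
  suffices #s ≤ 2 * q - 1 + 1 by lia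
  refine h.card_le_of_augIdeal_pow_eq_bot hne hpow fun b c hb hc hbc => ?_
  by_cases hlin : LinearIndependent (ZMod q) ![b, c]
  · exact .inl (hpair hlin)
  rw [LinearIndependent.pair_iff' hb] at hlin
  push Not at hlin
  obtain ⟨t, rfl⟩ := hlin
  refine .inr ⟨t.val, (val_nsmul_eq_smul t b).symm, ?_⟩
  have ht0 : t ≠ 0 := by
    rintro rfl
    exact hc (zero_smul _ b)
  rw [ZMod.natCast_zmod_val]
  refine mul_ne_zero (fun h2 => hbc ?_) ht0
  have hq2 : q = 2 :=
    (Nat.prime_dvd_prime_iff_eq Fact.out Nat.prime_two).1 ((ZMod.natCast_eq_zero_iff 2 q).1 h2)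
  subst hq2
  obtain rfl : t = 1 := Fin.eq_one_of_ne_zero t ht0
  exact (one_smul _ b).symm

end Plane

end UniqueFactorizationLength

section CrossNumberBound

variable {ι G : Type*} [AddCommGroup G]

open Classical in
/-- The contribution `1 / ord v` of `v` to a cross number. The zero element contributes `0` rather
than `1`, as it arises only from merging a zero-sum subfamily, which one would rather delete. -/
noncomputable def recipOrder (v : G) : ℝ := if v = 0 then 0 else 1 / addOrderOf v

theorem recipOrder_of_ne_zero {v : G} (hv : v ≠ 0) : recipOrder v = 1 / addOrderOf v := if_neg hv

theorem recipOrder_nonneg (v : G) : 0 ≤ recipOrder v := by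
  unfold recipOrder
  positivity

theorem one_div_le_recipOrder {n : ℕ} {v : G} (hn : 0 < n) (h : n • v = 0) (hv : v ≠ 0) :
    (1 : ℝ) / n ≤ recipOrder v := by
  have hdvd : addOrderOf v ∣ n := addOrderOf_dvd_of_nsmul_eq_zero h
  rw [recipOrder_of_ne_zero hv]
  exact one_div_le_one_div_of_le (mod_cast Nat.pos_of_dvd_of_pos hdvd hn)
    (mod_cast Nat.le_of_dvd hn hdvd)

theorem recipOrder_le_one_div {n : ℕ} {v : G} (hn : 0 < n) (h : n ≤ addOrderOf v) :
    recipOrder v ≤ 1 / n := by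
  unfold recipOrder
  split_ifs
  · positivity
  · exact one_div_le_one_div_of_le (mod_cast hn) (mod_cast h)

theorem sum_recipOrder_le_one_div {D : Finset ι} {g : ι → G} {p M : ℕ} (hp : 0 < p) (hM : 0 < M)
    (hD : #D ≤ p) (hord : ∀ i ∈ D, p * M ≤ addOrderOf (g i)) :
    ∑ i ∈ D, recipOrder (g i) ≤ 1 / M := by
  calc ∑ i ∈ D, recipOrder (g i) ≤ #D • (1 / (p * M : ℕ) : ℝ) :=
        sum_le_card_nsmul D _ _ fun i hi => recipOrder_le_one_div (by positivity) (hord i hi)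
    _ ≤ p * (1 / (p * M : ℕ)) := by
        rw [nsmul_eq_mul]
        gcongr
    _ = 1 / M := by
        push_cast
        field_simp

variable (G) in
/-- Every unique factorization family of elements of `G` killed by `n` has cross number at most
`β`. -/
def CrossNumberLE (n : ℕ) (β : ℝ) : Prop :=
  ∀ ⦃ι : Type⦄ [DecidableEq ι] ⦃s : Finset ι⦄ ⦃g : ι → G⦄, IsUF s g → (∀ i ∈ s, n • g i = 0) →
    ∑ i ∈ s, recipOrder (g i) ≤ β

theorem CrossNumberLE.sum_sdiff_add_sum_le {ι κ : Type} [DecidableEq ι] [DecidableEq κ] [Fintype κ]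
    {n : ℕ} {β : ℝ} (hβ : CrossNumberLE G n β) {s X : Finset ι} {g : ι → G} (h : IsUF s g)
    (hX : X ⊆ s) (c : ι → κ) (hs : ∀ i ∈ s \ X, n • g i = 0)
    (hc : ∀ k, n • ∑ i ∈ X with c i = k, g i = 0) :
    ∑ i ∈ s \ X, recipOrder (g i) + ∑ k, recipOrder (∑ i ∈ X with c i = k, g i) ≤ β := by
  simpa using hβ (h.merge hX c) (by simpa [hc] using hs)

theorem crossNumberLE_of_forall_recipOrder_sum_lt {n : ℕ} {β : ℝ}
    (H : ∀ {ι : Type} [DecidableEq ι] {s : Finset ι} {g : ι → G}, IsUF s g →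
      (∀ i ∈ s, n • g i = 0) →
      (∀ D ⊆ s, 1 < #D → recipOrder (∑ i ∈ D, g i) < ∑ i ∈ D, recipOrder (g i)) →
      ∑ i ∈ s, recipOrder (g i) ≤ β) : CrossNumberLE G n β := by
  intro ι _ s g h hn
  induction hs : #s using Nat.strong_induction_on generalizing ι with
  | _ N ih =>
  by_cases hlt : ∀ D ⊆ s, 1 < #D → recipOrder (∑ i ∈ D, g i) < ∑ i ∈ D, recipOrder (g i)
  · exact H h hn hlt
  push Not at hlt
  obtain ⟨D, hD, hD1, hle⟩ := hlt
  have hcard := card_sdiff_add_card_eq_card hD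
  have hmerged := ih _ (by simp; lia) (h.merge hD fun _ => ()) (by
    simp +contextual [hn, smul_sum, sum_eq_zero fun i hi => hn i (hD hi)]) rfl
  rw [← sum_sdiff hD]
  refine le_trans ?_ hmerged
  simpa using hle

variable {s C X : Finset ι} {g : ι → G}

theorem ZeroSumInterClosed.sum_recipOrder_le_of_forall_lt [DecidableEq ι]
    (h : ZeroSumInterClosed C g) (φ : G →+ G) (K : AddSubgroup G) [Finite K] {p M : ℕ}
    (hp : Nat.card K ≤ p) (hM : 0 < M) (hne : ∀ x ∈ C, φ (g x) ≠ 0)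
    (hK : ∀ x ∈ C, φ (g x) ∈ K) (hord : ∀ x ∈ C, p * M ≤ addOrderOf (g x))
    (hφ : ∀ D ⊆ C, φ (∑ i ∈ D, g i) = 0 → M • ∑ i ∈ D, g i = 0)
    (hlt : ∀ D ⊆ C, 1 < #D → recipOrder (∑ i ∈ D, g i) < ∑ i ∈ D, recipOrder (g i)) :
    ∑ i ∈ C, recipOrder (g i) ≤ 1 / M := by
  have hp0 : 0 < p := Nat.card_pos.trans_le hp
  have small_eq_zero : ∀ D ⊆ C, #D ≤ Nat.card K → φ (∑ i ∈ D, g i) = 0 → ∑ i ∈ D, g i = 0 := by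
    intro D hD hDK h0
    by_contra hD0
    have hD1 : 1 < #D := by
      refine one_lt_card_iff_nontrivial.2 <|
        (nonempty_of_sum_ne_zero hD0).exists_eq_singleton_or_nontrivial.resolve_left ?_
      rintro ⟨x, rfl⟩
      exact hne x (hD (mem_singleton_self x)) (by simpa using h0)
    exact (hlt D hD hD1).not_ge <|
      (sum_recipOrder_le_one_div hp0 hM (hDK.trans hp) fun i hi => hord i (hD hi)).trans
        (one_div_le_recipOrder hM (hφ D hD h0) hD0)
  exact sum_recipOrder_le_one_div hp0 hM ((h.card_le_of_map φ K hne hK small_eq_zero).trans hp) hord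

theorem IsUF.sum_recipOrder_le_add {ι : Type} [DecidableEq ι] {s X : Finset ι} {g : ι → G} {n : ℕ}
    {β γ : ℝ} (h : IsUF s g) (hβ : CrossNumberLE G n β) (hn : 0 < n) (hX : X ⊆ s)
    (hsX : ∀ i ∈ s \ X, n • g i = 0)
    (hγ : (∀ D ⊆ X, n • ∑ i ∈ D, g i = 0 → ∑ i ∈ D, g i = 0) → ∑ i ∈ X, recipOrder (g i) ≤ γ)
    (hγn : ∑ i ∈ X, recipOrder (g i) ≤ γ + 1 / n) :
    ∑ i ∈ s, recipOrder (g i) ≤ β + γ := by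
  have hXn : n • ∑ i ∈ X, g i = 0 := by
    have hsum := congrArg (n • ·) ((sum_sdiff hX).trans h.sum_eq_zero)
    simpa [smul_add, smul_sum, Finset.sum_eq_zero hsX] using hsum
  rw [← sum_sdiff hX]
  by_cases hD : ∀ D ⊆ X, n • ∑ i ∈ D, g i = 0 → ∑ i ∈ D, g i = 0
  · have hmerged := hβ.sum_sdiff_add_sum_le h hX (fun _ => ()) hsX (by simpa using hXn)
    have hnonneg := recipOrder_nonneg (∑ i ∈ X, g i)
    simp only [univ_unique, sum_singleton, filter_true] at hmerged
    linarith [hγ hD]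
  · push Not at hD
    obtain ⟨D, hDX, hDn, hD0⟩ := hD
    have filter_mem : {i ∈ X | i ∈ D} = D := by rw [filter_mem_eq_inter, inter_eq_right.2 hDX]
    have filter_notMem : {i ∈ X | i ∉ D} = X \ D := filter_notMem_eq_sdiff
    have hXDn : n • ∑ i ∈ X \ D, g i = 0 := by
      rw [sum_sdiff_eq_sub hDX, smul_sub, hXn, hDn, sub_zero]
    have hmerged := hβ.sum_sdiff_add_sum_le h hX (fun i => decide (i ∈ D)) hsX
      (by simp [filter_mem, filter_notMem, hDn, hXDn])
    have hD1 := one_div_le_recipOrder hn hDn hD0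
    have hnonneg := recipOrder_nonneg (∑ i ∈ X \ D, g i)
    simp only [Fintype.sum_bool, decide_eq_true_eq, decide_eq_false_iff_not, filter_mem,
      filter_notMem] at hmerged
    linarith

theorem eq_or_eq_of_dvd_of_not_dvd {p q j n : ℕ} (hp : p.Prime) (hq : q.Prime)
    (hn : n ∣ p ^ (j + 1) * q) (hn' : ¬n ∣ p ^ j * q) :
    n = p ^ (j + 1) ∨ n = p ^ (j + 1) * q := by
  obtain ⟨a, b, ha, hb, rfl⟩ := Nat.dvd_mul.1 hn
  obtain rfl : a = p ^ (j + 1) :=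
    Nat.eq_prime_pow_of_dvd_least_prime_pow hp (fun ha' => hn' (Nat.mul_dvd_mul ha' hb)) ha
  rcases (Nat.dvd_prime hq).1 hb with rfl | rfl
  · exact .inl (mul_one _)
  · exact .inr rfl

theorem addOrderOf_eq_or_eq {p q j : ℕ} {v : G} (hp : p.Prime) (hq : q.Prime)
    (hv : (p ^ (j + 1) * q) • v = 0) (hv' : (p ^ j * q) • v ≠ 0) :
    addOrderOf v = p ^ (j + 1) ∨ addOrderOf v = p ^ (j + 1) * q :=
  eq_or_eq_of_dvd_of_not_dvd hp hq (addOrderOf_dvd_of_nsmul_eq_zero hv)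
    (addOrderOf_dvd_iff_nsmul_eq_zero.not.2 hv')

theorem mul_pow_le_addOrderOf {p q j : ℕ} {v : G} (hp : p.Prime) (hq : q.Prime)
    (hv : (p ^ (j + 1) * q) • v = 0) (hv' : (p ^ j * q) • v ≠ 0) :
    p * p ^ j ≤ addOrderOf v := by
  rw [← pow_succ']
  rcases addOrderOf_eq_or_eq hp hq hv hv' with h | h
  · exact h.ge
  · exact (Nat.le_mul_of_pos_right _ hq.pos).trans h.ge

theorem ZeroSumInterClosed.sum_recipOrder_le_one_div_add [DecidableEq ι]
    (h : ZeroSumInterClosed X g) {p q j : ℕ} (hp : p.Prime) (hq : q.Prime) (hpq : p ≠ q)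
    [Finite (nsmulAddMonoidHom (α := G) p).ker]
    (hK : Nat.card (nsmulAddMonoidHom (α := G) p).ker ≤ p)
    (hkill : ∀ i ∈ X, (p ^ (j + 1) * q) • g i = 0) (hne : ∀ i ∈ X, (p ^ j * q) • g i ≠ 0)
    (hlt : ∀ D ⊆ X, 1 < #D → recipOrder (∑ i ∈ D, g i) < ∑ i ∈ D, recipOrder (g i)) :
    ∑ i ∈ X, recipOrder (g i) ≤ 1 / (p ^ j : ℕ) + 1 / (p ^ j * q : ℕ) := by
  classical
  have hpj : 0 < p ^ j := pow_pos hp.pos j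
  have hφK : ∀ i ∈ X, p • (p ^ j * q) • g i = 0 := by
    intro i hi
    rw [smul_smul, ← mul_assoc, ← pow_succ', hkill i hi]
  let A := {i ∈ X | p ^ (j + 1) • g i = 0}
  let B := {i ∈ X | p ^ (j + 1) • g i ≠ 0}
  have hA : A ⊆ X := filter_subset _ _
  have hB : B ⊆ X := filter_subset _ _
  have hgcd : (p ^ (j + 1)).gcd (p ^ j * q) = p ^ j := by
    rw [pow_succ, Nat.gcd_mul_left, (Nat.coprime_primes hp hq).2 hpq, mul_one]
  have hsumA : ∑ i ∈ A, recipOrder (g i) ≤ 1 / (p ^ j : ℕ) := by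
    refine (h.mono hA).sum_recipOrder_le_of_forall_lt (nsmulAddMonoidHom (p ^ j * q)) _ hK hpj
      (fun i hi => hne i (hA hi)) (fun i hi => hφK i (hA hi))
      (fun i hi => mul_pow_le_addOrderOf hp hq (hkill i (hA hi)) (hne i (hA hi)))
      (fun D hD h0 => ?_) fun D hD => hlt D (hD.trans hA)
    have hpD : p ^ (j + 1) • ∑ i ∈ D, g i = 0 := by
      rw [smul_sum]
      exact sum_eq_zero fun i hi => (mem_filter.1 (hD hi)).2
    exact hgcd ▸ gcd_nsmul_eq_zero.2 ⟨hpD, h0⟩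
  have hsumB : ∑ i ∈ B, recipOrder (g i) ≤ 1 / (p ^ j * q : ℕ) := by
    refine (h.mono hB).sum_recipOrder_le_of_forall_lt (nsmulAddMonoidHom (p ^ j * q)) _ hK
      (Nat.mul_pos hpj hq.pos) (fun i hi => hne i (hB hi)) (fun i hi => hφK i (hB hi))
      (fun i hi => ?_) (fun _ _ h0 => h0) fun D hD => hlt D (hD.trans hB)
    obtain ⟨hiX, hip⟩ := mem_filter.1 hi
    rw [(addOrderOf_eq_or_eq hp hq (hkill i hiX) (hne i hiX)).resolve_left fun h =>
      hip (h ▸ addOrderOf_nsmul_eq_zero _), pow_succ', mul_assoc]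
  rw [← sum_filter_add_sum_filter_not X fun i => p ^ (j + 1) • g i = 0]
  exact add_le_add hsumA hsumB

theorem CrossNumberLE.succ {p q j : ℕ} {β : ℝ} (hβ : CrossNumberLE G (p ^ j * q) β) (hp : p.Prime)
    (hq : q.Prime) (hpq : p ≠ q) [Finite (nsmulAddMonoidHom (α := G) p).ker]
    (hK : Nat.card (nsmulAddMonoidHom (α := G) p).ker ≤ p) :
    CrossNumberLE G (p ^ (j + 1) * q) (β + 1 / (p ^ j : ℕ)) := by
  classical
  refine crossNumberLE_of_forall_recipOrder_sum_lt fun {ι _ s g} h hkill hlt => ?_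
  have hpj : 0 < p ^ j := pow_pos hp.pos j
  let X := {i ∈ s | (p ^ j * q) • g i ≠ 0}
  have hX : X ⊆ s := filter_subset _ _
  have hne : ∀ i ∈ X, (p ^ j * q) • g i ≠ 0 := fun i hi => (mem_filter.1 hi).2
  have hφK : ∀ i ∈ X, p • (p ^ j * q) • g i = 0 := by
    intro i hi
    rw [smul_smul, ← mul_assoc, ← pow_succ', hkill i (hX hi)]
  refine h.sum_recipOrder_le_add hβ (Nat.mul_pos hpj hq.pos) hX (fun i hi => ?_) (fun hX0 => ?_) ?_
  · by_contra hi0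
    obtain ⟨his, hiX⟩ := mem_sdiff.1 hi
    exact hiX (mem_filter.2 ⟨his, hi0⟩)
  · have hcard : #X ≤ p := ((h.interClosed.mono hX).card_le_of_map
      (nsmulAddMonoidHom (p ^ j * q)) _ hne hφK fun D hD _ => hX0 D hD).trans hK
    exact sum_recipOrder_le_one_div hp.pos hpj hcard fun i hi =>
      mul_pow_le_addOrderOf hp hq (hkill i (hX hi)) (hne i hi)
  · exact (h.interClosed.mono hX).sum_recipOrder_le_one_div_add hp hq hpq hK
      (fun i hi => hkill i (hX hi)) hne fun D hD => hlt D (hD.trans hX)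

theorem CrossNumberLE.add_geom_sum {p q : ℕ} {β : ℝ} (hβ : CrossNumberLE G q β) (hp : p.Prime)
    (hq : q.Prime) (hpq : p ≠ q) [Finite (nsmulAddMonoidHom (α := G) p).ker]
    (hK : Nat.card (nsmulAddMonoidHom (α := G) p).ker ≤ p) (m : ℕ) :
    CrossNumberLE G (p ^ m * q) (∑ k ∈ range m, 1 / (p : ℝ) ^ k + β) := by
  induction m with
  | zero => simpa using hβ
  | succ m ih =>
    have h := ih.succ hp hq hpq hK
    rwa [add_right_comm, Nat.cast_pow, ← sum_range_succ] at h

theorem crossNumberLE_two {q : ℕ} [Fact q.Prime] {V : Type*} [AddCommGroup V] [Module (ZMod q) V]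
    (hV : Module.finrank (ZMod q) V = 2) (φ : G →+ V) (hφ : ∀ v, q • v = 0 → φ v = 0 → v = 0) :
    CrossNumberLE G q 2 := by
  classical
  intro ι _ s g h hq
  have hq0 : (q : ℝ) ≠ 0 := mod_cast (Fact.out : q.Prime).ne_zero
  let t := s \ {i ∈ s | g i = 0}
  have hts : t ⊆ s := sdiff_subset
  have mem_t {i : ι} : i ∈ t ↔ i ∈ s ∧ g i ≠ 0 := by simp +contextual [t, iff_def]
  have ht : IsUF t g := h.sdiff (filter_subset _ _) (sum_eq_zero fun i hi => (mem_filter.1 hi).2)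
  have hφt : IsUF t (fun i => φ (g i)) := by
    refine ht.map φ fun I hI => hφ _ ?_
    rw [smul_sum]
    exact sum_eq_zero fun i hi => hq i (hts (hI hi))
  have hcard : #t ≤ 2 * q := hφt.card_le_two_mul
    (fun i hi h0 => (mem_t.1 hi).2 (hφ _ (hq i (hts hi)) h0)) hV
  calc ∑ i ∈ s, recipOrder (g i) = ∑ i ∈ t, recipOrder (g i) :=
        (sum_subset hts fun i hi hit => by simp_all [recipOrder]).symm
    _ = ∑ i ∈ t, 1 / (q : ℝ) := sum_congr rfl fun i hi => by
        rw [recipOrder_of_ne_zero (mem_t.1 hi).2,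
          addOrderOf_eq_prime (hq i (hts hi)) (mem_t.1 hi).2]
    _ ≤ (2 * q : ℕ) * (1 / q) := by
        rw [sum_const, nsmul_eq_mul]
        gcongr
    _ = 2 := by
        push_cast
        field_simp

theorem IsUFIM.crossNum_le {ℓ n : ℕ} {β : ℝ} {g : Fin ℓ → G} (h : IsUFIM g)
    (hβ : CrossNumberLE G n β) (hn : ∀ v : G, n • v = 0) : crossNum g ≤ β := by
  have hsum : crossNum g = ∑ i, recipOrder (g i) :=
    sum_congr rfl fun i _ => (recipOrder_of_ne_zero (h.1 i)).symm
  exact hsum ▸ hβ h.isUF fun i _ => hn (g i)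

end CrossNumberBound

section LowerBound

variable {ι κ G H : Type*} [AddCommGroup G] [AddCommGroup H]

theorem IsUF.comp_equiv [Fintype ι] [DecidableEq ι] [Fintype κ] [DecidableEq κ] {g : ι → G}
    (h : IsUF univ g) (e : κ ≃ ι) : IsUF univ (g ∘ e) :=
  (h.fiberSum fun i _ => mem_univ (e.symm i)).congr fun k _ => by
    simp [Equiv.symm_apply_eq, filter_eq']

theorem IsUF.sumElim [Fintype ι] [DecidableEq ι] [Fintype κ] [DecidableEq κ] {g : ι → G}
    {h : κ → G} (hg : IsUF univ g) (hh : IsUF univ h) (A : AddSubgroup G) (hgA : ∀ i, g i ∈ A)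
    (hhA : ∀ J, ∑ k ∈ J, h k ∈ A → ∑ k ∈ J, h k = 0) : IsUF univ (Sum.elim g h) := by
  have sum_eq (I : Finset (ι ⊕ κ)) :
      ∑ i ∈ I, Sum.elim g h i = ∑ i ∈ I.toLeft, g i + ∑ k ∈ I.toRight, h k := by
    rw [← toLeft_disjSum_toRight (u := I), sum_disjSum]
    simp
  have right_eq_zero {I : Finset (ι ⊕ κ)} (hI : ∑ i ∈ I, Sum.elim g h i = 0) :
      ∑ k ∈ I.toRight, h k = 0 := by
    refine hhA _ ?_
    rw [sum_eq, add_comm] at hI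
    exact eq_neg_of_add_eq_zero_left hI ▸ A.neg_mem (A.sum_mem fun i _ => hgA i)
  have left_eq_zero {I : Finset (ι ⊕ κ)} (hI : ∑ i ∈ I, Sum.elim g h i = 0) :
      ∑ i ∈ I.toLeft, g i = 0 := by
    simpa only [sum_eq, right_eq_zero hI, add_zero] using hI
  refine ⟨by simp [hg.sum_eq_zero, hh.sum_eq_zero], fun I _ J _ hI hJ => ?_⟩
  rw [sum_eq, toLeft_inter, toRight_inter,
    hg.interClosed (subset_univ _) (subset_univ _) (left_eq_zero hI) (left_eq_zero hJ),
    hh.interClosed (subset_univ _) (subset_univ _) (right_eq_zero hI) (right_eq_zero hJ), add_zero]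

/-- `x` is the cross number of a unique factorization indexed multiset over `A ∖ {0}`. Working
inside a subgroup `A` allows to enlarge the multiset by elements independent of `A`. -/
def IsCrossNumber (A : AddSubgroup G) (x : ℝ) : Prop :=
  ∃ (ℓ : ℕ) (g : Fin ℓ → G), IsUFIM g ∧ (∀ i, g i ∈ A) ∧ crossNum g = x

variable {A B : AddSubgroup G} {x y : ℝ}

theorem IsUF.isCrossNumber [Fintype κ] [DecidableEq κ] {g : κ → G} (h : IsUF univ g)
    (hne : ∀ i, g i ≠ 0) (hA : ∀ i, g i ∈ A) : IsCrossNumber A (∑ i, 1 / (addOrderOf (g i) : ℝ)) :=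
  have e := (Fintype.equivFin κ).symm
  ⟨_, g ∘ e, (h.comp_equiv e).isUFIM fun i => hne (e i), fun i => hA (e i),
    e.sum_comp fun i => 1 / (addOrderOf (g i) : ℝ)⟩

theorem isCrossNumber_zero : IsCrossNumber A 0 := by
  have h : IsUF univ (0 : Empty → G) := ⟨by simp, fun _ _ _ _ _ _ => by simp⟩
  simpa using h.isCrossNumber (A := A) nofun nofun

namespace IsCrossNumber

theorem mono (hx : IsCrossNumber A x) (hAB : A ≤ B) : IsCrossNumber B x := by
  obtain ⟨ℓ, g, hg, hgA, rfl⟩ := hx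
  exact ⟨ℓ, g, hg, fun i => hAB (hgA i), rfl⟩

theorem map (hx : IsCrossNumber A x) {φ : G →+ H} (hφ : Function.Injective φ) :
    IsCrossNumber (A.map φ) x := by
  obtain ⟨ℓ, g, hg, hgA, rfl⟩ := hx
  refine ⟨ℓ, fun i => φ (g i), (hg.isUF.map φ fun I _ => (map_eq_zero_iff φ hφ).1).isUFIM
    fun i => (map_ne_zero_iff φ hφ).2 (hg.1 i), fun i => ⟨g i, hgA i, rfl⟩, ?_⟩
  simp [crossNum, addOrderOf_injective φ hφ]

theorem add_sum [Fintype κ] [DecidableEq κ] (hx : IsCrossNumber A x) {h : κ → G}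
    (hh : IsUF univ h) (hne : ∀ k, h k ≠ 0) (hhA : ∀ J, ∑ k ∈ J, h k ∈ A → ∑ k ∈ J, h k = 0)
    (hAB : A ≤ B) (hhB : ∀ k, h k ∈ B) :
    IsCrossNumber B (x + ∑ k, 1 / (addOrderOf (h k) : ℝ)) := by
  obtain ⟨ℓ, g, hg, hgA, rfl⟩ := hx
  simpa [crossNum] using (hg.isUF.sumElim hh A hgA hhA).isCrossNumber (A := B)
    (Sum.rec hg.1 hne) (Sum.rec (fun i => hAB (hgA i)) hhB)

theorem prod (hx : IsCrossNumber (⊤ : AddSubgroup G) x) (hy : IsCrossNumber (⊤ : AddSubgroup H) y) :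
    IsCrossNumber (⊤ : AddSubgroup (G × H)) (x + y) := by
  obtain ⟨ℓ, h, hh, hhB, rfl⟩ := hy.map (φ := AddMonoidHom.inr G H) (Prod.mk_right_injective 0)
  have hx' := hx.map (φ := AddMonoidHom.inl G H) (Prod.mk_left_injective 0)
  refine hx'.add_sum hh.isUF hh.1 (fun J hJ => ?_) le_top fun _ => AddSubgroup.mem_top _
  have hJ' := AddSubgroup.sum_mem _ fun k (_ : k ∈ J) => hhB k
  simp_all [Prod.ext_iff]

end IsCrossNumber

theorem dvd_of_nsmul_mem_zmultiples {n k : ℕ} {a : G} (hn : n ∣ addOrderOf a)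
    (hk : k • a ∈ AddSubgroup.zmultiples (n • a)) : n ∣ k := by
  obtain ⟨t, ht⟩ := hk
  have hsub : ((k : ℤ) - t * n) • a = 0 := by
    rw [sub_smul, mul_smul]
    simpa [sub_eq_zero] using ht.symm
  have hdvd := (Int.natCast_dvd_natCast.2 hn).trans (addOrderOf_dvd_iff_zsmul_eq_zero.2 hsub)
  exact Int.natCast_dvd_natCast.1 ((dvd_sub_left (dvd_mul_left _ _)).1 hdvd)

/-- The minimal zero-sum family `(1 - n)a, a, …, a` of length `n`. -/
def fullBlock (n : ℕ) [NeZero n] (a : G) : Fin n → G :=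
  fun i => a - if i = 0 then n • a else 0

section fullBlock

variable {n : ℕ} [NeZero n] {a : G}

theorem sum_fullBlock (J : Finset (Fin n)) :
    ∑ i ∈ J, fullBlock n a i = #J • a - if 0 ∈ J then n • a else 0 := by
  simp [fullBlock, Finset.sum_sub_distrib]

theorem eq_empty_or_eq_univ_of_sum_fullBlock_mem (hn : n ∣ addOrderOf a) {J : Finset (Fin n)}
    (hJ : ∑ i ∈ J, fullBlock n a i ∈ AddSubgroup.zmultiples (n • a)) : J = ∅ ∨ J = univ := by
  have hcard : #J • a ∈ AddSubgroup.zmultiples (n • a) := by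
    have hite : (if 0 ∈ J then n • a else 0) ∈ AddSubgroup.zmultiples (n • a) := by
      split_ifs <;> simp
    simpa [sum_fullBlock] using add_mem hJ hite
  have hdvd := dvd_of_nsmul_mem_zmultiples hn hcard
  have hle : #J ≤ n := by simpa using card_le_univ J
  rcases (#J).eq_zero_or_pos with h0 | h0
  · exact .inl (card_eq_zero.1 h0)
  · exact .inr ((card_eq_iff_eq_univ J).1 (by simpa using hle.antisymm (Nat.le_of_dvd h0 hdvd)))

theorem sum_univ_fullBlock : ∑ i, fullBlock n a i = 0 := by
  simp [sum_fullBlock]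

theorem sum_fullBlock_eq_zero_of_mem (hn : n ∣ addOrderOf a) {J : Finset (Fin n)}
    (hJ : ∑ i ∈ J, fullBlock n a i ∈ AddSubgroup.zmultiples (n • a)) :
    ∑ i ∈ J, fullBlock n a i = 0 := by
  rcases eq_empty_or_eq_univ_of_sum_fullBlock_mem hn hJ with rfl | rfl
  · exact sum_empty
  · exact sum_univ_fullBlock

theorem isUF_fullBlock (hn : n ∣ addOrderOf a) : IsUF univ (fullBlock n a) := by
  refine ⟨sum_univ_fullBlock, fun I _ J _ hI hJ => ?_⟩
  rcases eq_empty_or_eq_univ_of_sum_fullBlock_mem hn (hI ▸ zero_mem _) with rfl | rfl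
  · simp
  · simpa using hJ

theorem fullBlock_mem_zmultiples (i : Fin n) : fullBlock n a i ∈ AddSubgroup.zmultiples a := by
  unfold fullBlock
  split_ifs
  · exact sub_mem (AddSubgroup.mem_zmultiples a) (nsmul_mem (AddSubgroup.mem_zmultiples a) n)
  · simp

theorem addOrderOf_fullBlock {k : ℕ} (hn : n.Prime) (ha : addOrderOf a = n ^ (k + 1)) (i : Fin n) :
    addOrderOf (fullBlock n a i) = n ^ (k + 1) := by
  have := Fact.mk hn
  have hk1 : n ^ (k + 1) • a = 0 := ha ▸ addOrderOf_nsmul_eq_zero a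
  have hk : n ^ k • fullBlock n a i = n ^ k • a := by
    simp [fullBlock, smul_sub, smul_smul, ← pow_succ, hk1]
  refine addOrderOf_eq_prime_pow (fun h => ?_) ?_
  · rw [hk, ← addOrderOf_dvd_iff_nsmul_eq_zero, ha, Nat.pow_dvd_pow_iff_le_right hn.one_lt] at h
    lia
  · rw [pow_succ', mul_smul, hk, smul_smul, ← pow_succ', hk1]

end fullBlock

theorem isCrossNumber_zmultiples {p m : ℕ} (hp : p.Prime) {a : G} (ha : addOrderOf a = p ^ m) :
    IsCrossNumber (AddSubgroup.zmultiples a) (∑ k ∈ range m, 1 / (p : ℝ) ^ k) := by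
  have := NeZero.mk hp.ne_zero
  induction m generalizing a with
  | zero => simpa using isCrossNumber_zero
  | succ m ih =>
    have hdvd : p ∣ addOrderOf a := ha ▸ dvd_pow_self p m.succ_ne_zero
    have hpa : addOrderOf (p • a) = p ^ m := by
      rw [addOrderOf_nsmul_of_dvd hp.ne_zero hdvd, ha, pow_succ, Nat.mul_div_cancel _ hp.pos]
    have hord := addOrderOf_fullBlock hp ha
    have hne (i : Fin p) : fullBlock p a i ≠ 0 := by
      rw [ne_eq, ← AddMonoid.addOrderOf_eq_one_iff, hord]
      exact (Nat.one_lt_pow m.succ_ne_zero hp.one_lt).ne'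
    have hle : AddSubgroup.zmultiples (p • a) ≤ AddSubgroup.zmultiples a :=
      AddSubgroup.zmultiples_le.2 (nsmul_mem (AddSubgroup.mem_zmultiples a) p)
    have hsum : ∑ i, 1 / (addOrderOf (fullBlock p a i) : ℝ) = 1 / (p : ℝ) ^ m := by
      have hp0 : (p : ℝ) ≠ 0 := mod_cast hp.ne_zero
      simp only [hord, sum_const, card_univ, Fintype.card_fin, nsmul_eq_mul, Nat.cast_pow]
      field_simp
      ring
    rw [sum_range_succ, ← hsum]
    exact (ih hpa).add_sum (isUF_fullBlock hdvd) hne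
      (fun _ => sum_fullBlock_eq_zero_of_mem hdvd) hle fullBlock_mem_zmultiples

theorem isCrossNumber_zmod {p m n : ℕ} (hp : p.Prime) (hn : n = p ^ m) :
    IsCrossNumber (⊤ : AddSubgroup (ZMod n)) (∑ k ∈ range m, 1 / (p : ℝ) ^ k) :=
  (isCrossNumber_zmultiples hp ((ZMod.addOrderOf_one n).trans hn)).mono le_top

end LowerBound

section Prod

variable {A B : Type*} [AddCommGroup A] [AddCommGroup B]

theorem eq_zero_of_coprime_of_nsmul {m n : ℕ} (h : m.Coprime n) {v : A} (hm : m • v = 0)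
    (hn : n • v = 0) : v = 0 := by
  simpa [h.gcd_eq_one] using gcd_nsmul_eq_zero.2 ⟨hm, hn⟩

theorem card_ker_nsmul_prod_le [Finite A] [IsAddCyclic A] {n : ℕ} (hn : 0 < n)
    (hB : ∀ b : B, n • b = 0 → b = 0) :
    Nat.card (nsmulAddMonoidHom (α := A × B) n).ker ≤ n := by
  classical
  have := Fintype.ofFinite A
  let f (v : (nsmulAddMonoidHom (α := A × B) n).ker) : {a : A // n • a = 0} :=
    ⟨v.1.1, congrArg Prod.fst v.2⟩
  have hf : Function.Injective f := fun v w hvw =>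
    Subtype.ext <| Prod.ext (congrArg Subtype.val hvw) <|
      (hB _ (congrArg Prod.snd v.2)).trans (hB _ (congrArg Prod.snd w.2)).symm
  calc Nat.card (nsmulAddMonoidHom (α := A × B) n).ker ≤ Nat.card {a : A // n • a = 0} :=
        Nat.card_le_card_of_injective f hf
    _ = #{a : A | n • a = 0} := by rw [Nat.card_eq_fintype_card, Fintype.card_subtype]
    _ ≤ n := IsAddCyclic.card_nsmul_eq_zero_le hn

end Prod

section ZMod

variable {p q m : ℕ}

theorem crossNumberLE_zmod_prod (hp : p.Prime) (hq : q.Prime) (hpq : p ≠ q) :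
    CrossNumberLE (ZMod (p ^ m) × ZMod q × ZMod q) (p ^ m * q)
      (∑ k ∈ range m, 1 / (p : ℝ) ^ k + 2) := by
  have := Fact.mk hq
  have : NeZero p := ⟨hp.ne_zero⟩
  have hcop : p.Coprime q := (Nat.coprime_primes hp hq).2 hpq
  have hbase : CrossNumberLE (ZMod (p ^ m) × ZMod q × ZMod q) q 2 := by
    refine crossNumberLE_two (by simp) (AddMonoidHom.snd _ _) fun v hv hv2 => ?_
    have hv1 : v.1 = 0 :=
      eq_zero_of_coprime_of_nsmul (hcop.pow_left m) (by simp) (congrArg Prod.fst hv)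
    exact Prod.ext hv1 hv2
  refine hbase.add_geom_sum hp hq hpq (card_ker_nsmul_prod_le hp.pos fun b hb => ?_) m
  exact eq_zero_of_coprime_of_nsmul hcop hb (by ext <;> simp)

theorem isCrossNumber_zmod_prod (hp : p.Prime) (hq : q.Prime) :
    IsCrossNumber (⊤ : AddSubgroup (ZMod (p ^ m) × ZMod q × ZMod q))
      (∑ k ∈ range m, 1 / (p : ℝ) ^ k + 2) := by
  have hq1 : IsCrossNumber (⊤ : AddSubgroup (ZMod q)) 1 := by
    simpa using isCrossNumber_zmod hq (pow_one q).symm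
  have hq2 := hq1.prod hq1
  rw [one_add_one_eq_two] at hq2
  exact (isCrossNumber_zmod hp rfl).prod hq2

end ZMod

theorem sum_one_div_pow_eq_div {x : ℝ} (hx0 : x ≠ 0) (hx1 : x ≠ 1) {m : ℕ} (hm : 1 ≤ m) :
    ∑ k ∈ range m, 1 / x ^ k = (x ^ m - 1) / (x ^ m - x ^ (m - 1)) := by
  obtain ⟨n, rfl⟩ := Nat.exists_eq_add_of_le' hm
  have hx1' : x - 1 ≠ 0 := sub_ne_zero.2 hx1
  have hden : x ^ (n + 1) - x ^ n = x ^ n * (x - 1) := by ring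
  simp only [one_div, ← inv_pow, geom_sum_inv hx1 hx0, Nat.add_sub_cancel, hden]
  rw [inv_pow]
  field_simp
  ring

/-- `K₁(C_{p^m} ⊕ C_q ⊕ C_q) = Σ_{k=1}^m 1/p^{k−1} + 2 = (p^m − 1)/(p^m − p^{m−1}) + 2`
for distinct primes `p, q`. -/
theorem K1_pm_q_q (p q : ℕ) (hp : p.Prime) (hq : q.Prime) (hpq : p ≠ q)
    (m : ℕ) (hm : 1 ≤ m) :
    K1 (ZMod (p ^ m) × ZMod q × ZMod q) =
      (∑ k ∈ Finset.range m, (1 : ℝ) / (p : ℝ) ^ k) + 2 ∧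
    K1 (ZMod (p ^ m) × ZMod q × ZMod q) =
      ((p : ℝ) ^ m - 1) / ((p : ℝ) ^ m - (p : ℝ) ^ (m - 1)) + 2 := by
  have hK1 : K1 (ZMod (p ^ m) × ZMod q × ZMod q) = ∑ k ∈ range m, 1 / (p : ℝ) ^ k + 2 := by
    refine IsGreatest.csSup_eq ⟨?_, ?_⟩
    · obtain ⟨ℓ, g, hg, -, hsum⟩ := isCrossNumber_zmod_prod (m := m) hp hq
      exact ⟨ℓ, g, hg, hsum⟩
    · rintro _ ⟨ℓ, g, hg, rfl⟩
      refine hg.crossNum_le (crossNumberLE_zmod_prod hp hq hpq) fun v => ?_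
      have hv1 : (p ^ m * q) • v.1 = 0 := by rw [mul_comm, mul_smul]; simp
      exact Prod.ext hv1 (by ext <;> simp)
  refine ⟨hK1, ?_⟩
  rw [hK1, sum_one_div_pow_eq_div (mod_cast hp.ne_zero) (mod_cast hp.ne_one) hm]
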